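/- Assume the abc-conjecture. Let p ≥ 5 be a prime number and let ε be a real number with 0 < ε < 1/(p−1). Then there exist a constant c > 0 and a real number X₀ such that for all real X ≥ X₀, the number of squarefree positive integers d such that |d_K| ≤ X for K = ℚ(√−d) (where d_K is the discriminant of K) and the ideal class group Cl_K of K contains a subgroup isomorphic to (ℤ/pℤ) × (ℤ/pℤ), is at least c·X^{1/(p−1) − ε}. -/

import Mathlib

open scoped BigOperators

/-- The abc-conjecture: for every `ε > 0` there is a constant `C > 0` such that for all
pairwise coprime positive integers `a, b, c` with `a + b = c`, one has
`c < C · rad(abc)^{1+ε}`, where `rad(n)` is the product of the distinct primes dividing `n`. -/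
def ABCConjecture : Prop :=
  ∀ ε : ℝ, 0 < ε → ∃ C : ℝ, 0 < C ∧
    ∀ a b c : ℕ, 0 < a → 0 < b → 0 < c →
      Nat.Coprime a b → Nat.Coprime a c → Nat.Coprime b c → a + b = c →
        (c : ℝ) < C * (∏ ℓ ∈ (a * b * c).primeFactors, (ℓ : ℝ)) ^ (1 + ε)

/-!
Let `w₁ > w₂` be coprime integers whose difference `4 C s` is small compared with them, and write
`w₁ᵖ - w₂ᵖ = 4 C s q f`. Distributing the factors of this number over `k (u₁ - u₂) (u₁ + u₂)`, with
`k` a small multiple of the squarefree kernel of `f` up to squares, gives simultaneous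
representations `k u₁² + l = w₁ᵖ` and `k u₂² + l = w₂ᵖ`. Over `ℚ(√(-k l))` the elements
`γᵢ = (√k uᵢ + √(-l))²` have norm `wᵢ²ᵖ` and are coprime to their conjugates, so each generates the
`p`-th power of an ideal. A relation `γ₁ˣ γ₂ʸ = ηᵖ` with small `x` and `y` would make `η` an
integer of norm too small for `k` unless it is rational, which it is not. Every relation modulo
`p` has a short multiple, so the two ideal classes generate a copy of `(ℤ/p)²`.

The abc-conjecture for `w₂ᵖ + 4 C s q f = w₁ᵖ` makes `rad f`, and with it the squarefree part of
`k`, large enough. Primes `q` and `s` congruent to `1` modulo `p` provide, up to small powers of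
`U`, as many as `U²` pairs `w₁`, `w₂` of size `U`, and the resulting `d` are at most about
`U^(2p - 2)`; hence the exponent `1 / (p - 1)`. Few pairs share the same `d`: it has few divisors,
one of them an `n ≥ U²` dividing the power quotient `(w₁ᵖ - w₂ᵖ) / (w₁ - w₂)`, so that `w₂ / w₁` is
one of few `p`-th roots of unity modulo `n`, and each of these residues comes from few pairs.
-/

/-! ### Rank two from the absence of short relations -/

theorem exists_short_multiple (n : ℕ) [NeZero n] (m : ZMod n) :
    ∃ x y : ℤ, x ≠ 0 ∧ x.natAbs + y.natAbs ≤ max 3 (n - 4) ∧ (y : ZMod n) = m * x := by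
  have hr : m.valMinAbs.natAbs ≤ n / 2 := m.natAbs_valMinAbs_le
  have : ((m.valMinAbs : ℤ) : ZMod n) = m := m.coe_valMinAbs
  by_cases h : 1 + m.valMinAbs.natAbs ≤ max 3 (n - 4)
  · exact ⟨1, m.valMinAbs, one_ne_zero, h, by simp⟩
  -- A residue this far from `0` is so close to `± n / 2` that doubling it makes it short.
  · refine ⟨2, 2 * m.valMinAbs - m.valMinAbs.sign * n, two_ne_zero, ?_, by
      push_cast; rw [ZMod.natCast_self, mul_zero, sub_zero, mul_comm]⟩
    rcases lt_trichotomy m.valMinAbs 0 with hs | hs | hs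
    · rw [Int.sign_eq_neg_one_of_neg hs]; omega
    · rw [hs] at h; simp at h
    · rw [Int.sign_eq_one_of_pos hs]; omega

section Rank

variable {G : Type*} [CommGroup G] {p : ℕ} {a b : G}

theorem zpow_eq_one_of_pow_eq_one_of_dvd {a : G} (ha : a ^ p = 1) {x : ℤ} (hx : (p : ℤ) ∣ x) :
    a ^ x = 1 := by
  obtain ⟨y, rfl⟩ := hx
  rw [zpow_mul, zpow_natCast, ha, one_zpow]

theorem exists_subgroup_mulEquiv_prod_of_independent (ha : a ^ p = 1) (hb : b ^ p = 1)
    (hind : ∀ x y : ℤ, a ^ x * b ^ y = 1 → (p : ℤ) ∣ x ∧ (p : ℤ) ∣ y) :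
    ∃ H : Subgroup G, Nonempty (H ≃* Multiplicative (ZMod p × ZMod p)) := by
  let powHom (c : G) (hc : c ^ p = 1) : ZMod p →+ Additive G :=
    ZMod.lift p ⟨zmultiplesHom (Additive G) (Additive.ofMul c), by
      rw [zmultiplesHom_apply, natCast_zsmul, ← ofMul_pow, hc, ofMul_one]⟩
  let f : ZMod p × ZMod p →+ Additive G := (powHom a ha).coprod (powHom b hb)
  have hf : Function.Injective f := by
    rw [injective_iff_map_eq_zero]
    rintro ⟨x, y⟩ hxy
    obtain ⟨x, rfl⟩ := ZMod.intCast_surjective x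
    obtain ⟨y, rfl⟩ := ZMod.intCast_surjective y
    have hrel : a ^ x * b ^ y = 1 := Additive.ofMul.injective <| by
      simpa only [f, powHom, AddMonoidHom.coprod_apply, ZMod.lift_coe, zmultiplesHom_apply,
        ofMul_mul, ofMul_zpow, ofMul_one] using hxy
    obtain ⟨hx, hy⟩ := hind x y hrel
    exact Prod.ext ((ZMod.intCast_zmod_eq_zero_iff_dvd x p).2 hx)
      ((ZMod.intCast_zmod_eq_zero_iff_dvd y p).2 hy)
  let F : Multiplicative (ZMod p × ZMod p) →* G := AddMonoidHom.toMultiplicativeLeft f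
  have hF : Function.Injective F := fun x y hxy => hf hxy
  exact ⟨F.range, ⟨(MonoidHom.ofInjective hF).symm⟩⟩

theorem dvd_of_zpow_mul_zpow_eq_one (hp : p.Prime) (ha : a ^ p = 1) (hb : b ^ p = 1)
    (hshort : ∀ x y : ℤ, (x ≠ 0 ∨ y ≠ 0) → x.natAbs + y.natAbs ≤ max 3 (p - 4) →
      a ^ x * b ^ y ≠ 1) {x y : ℤ} (hxy : a ^ x * b ^ y = 1) :
    (p : ℤ) ∣ x ∧ (p : ℤ) ∣ y := by
  have := Fact.mk hp
  have hinv (z : ℤ) (hz : ¬ (p : ℤ) ∣ z) : ∃ s t : ℤ, s * z + t * p = 1 :=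
    (((Nat.prime_iff_prime_int.mp hp).coprime_iff_not_dvd).2 hz).symm
  by_cases hx : (p : ℤ) ∣ x
  · refine ⟨hx, by_contra fun hy => ?_⟩
    obtain ⟨s, t, hst⟩ := hinv y hy
    rw [zpow_eq_one_of_pow_eq_one_of_dvd ha hx, one_mul] at hxy
    have hb1 : b = 1 := by
      rw [← zpow_one b, ← hst, zpow_add, mul_comm s, zpow_mul, hxy, one_zpow, one_mul,
        zpow_eq_one_of_pow_eq_one_of_dvd hb (dvd_mul_left _ _)]
    exact hshort 0 1 (by simp) (by simp) (by simp [hb1])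
  · obtain ⟨s, t, hst⟩ := hinv x hx
    obtain ⟨x', y', hx', hshort', hm⟩ := exists_short_multiple p ((y * s : ℤ) : ZMod p)
    refine (hshort x' y' (Or.inl hx') hshort' ?_).elim
    have hdvd : (p : ℤ) ∣ y' - y * s * x' := by
      rw [← ZMod.intCast_zmod_eq_zero_iff_dvd]
      push_cast
      rw [hm]
      push_cast
      ring
    have hax : a ^ x' = a ^ (x * (s * x')) := by
      rw [← mul_inv_eq_one, ← zpow_neg, ← zpow_add]
      exact zpow_eq_one_of_pow_eq_one_of_dvd ha ⟨t * x', by linear_combination -x' * hst⟩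
    have hby : b ^ y' = b ^ (y * (s * x')) := by
      rw [← mul_inv_eq_one, ← zpow_neg, ← zpow_add]
      exact zpow_eq_one_of_pow_eq_one_of_dvd hb (by convert hdvd using 1; ring)
    rw [hax, hby, zpow_mul a, zpow_mul b, ← mul_zpow, hxy, one_zpow]

end Rank

open NumberField

/-! ### Imaginary quadratic fields -/

theorem exists_int_of_squarefree_mul_sq {d : ℕ} (hd : Squarefree d) {r : ℚ} {n : ℤ}
    (h : d * r ^ 2 = n) : ∃ m : ℤ, r = m := by
  have : (r.den : ℚ) ≠ 0 := by exact_mod_cast r.den_ne_zero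
  have hclear : (d : ℤ) * r.num ^ 2 = n * (r.den : ℤ) ^ 2 := by
    have hq : (d : ℚ) * r.num ^ 2 = n * (r.den : ℚ) ^ 2 := by
      rw [← h, ← Rat.mul_den_eq_num r]
      ring
    exact_mod_cast hq
  have hcop : IsCoprime ((r.den : ℤ) ^ 2) (r.num ^ 2) :=
    (Int.isCoprime_iff_nat_coprime.2 (by simpa using r.reduced.symm)).pow
  have hdvd : (r.den : ℤ) ^ 2 ∣ d := hcop.dvd_of_dvd_mul_right ⟨n, by rw [hclear, mul_comm]⟩
  have hunit : r.den = 1 := Nat.isUnit_iff.1 (hd _ (by rw [← sq]; exact_mod_cast hdvd))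
  exact ⟨r.num, (Rat.den_eq_one_iff r).1 hunit |>.symm⟩

/-- `α` presents its field as `ℚ(√-d)`: it is a square root of `-d` and generates the field
over `ℚ`. -/
structure IsSqrtNegGenerator {K : Type*} [Field K] [NumberField K] (d : ℕ) (α : K) : Prop where
  sq_eq : α ^ 2 = -(d : K)
  adjoin_eq_top : Algebra.adjoin ℚ {α} = ⊤

theorem exists_int_of_isIntegral_ratCast {K : Type*} [Field K] [CharZero K] {r : ℚ}
    (hr : IsIntegral ℤ (r : K)) : ∃ m : ℤ, r = m := by
  have hr' : IsIntegral ℤ (algebraMap ℚ K r) := by simpa only [eq_ratCast] using hr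
  obtain ⟨m, hm⟩ := IsIntegrallyClosed.isIntegral_iff.1
    ((isIntegral_algebraMap_iff (algebraMap ℚ K).injective).1 hr')
  exact ⟨m, hm.symm⟩

namespace IsSqrtNegGenerator

variable {K : Type*} [Field K] [NumberField K] {d : ℕ} {α : K}

theorem exists_rat_repr (h : IsSqrtNegGenerator d α) (x : K) : ∃ s t : ℚ, x = s + t * α := by
  have hx : x ∈ Algebra.adjoin ℚ {α} := h.adjoin_eq_top ▸ Algebra.mem_top
  induction hx using Algebra.adjoin_induction with
  | mem y hy => exact ⟨0, 1, by simpa using hy⟩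
  | algebraMap r => exact ⟨r, 0, by simp⟩
  | add a b _ _ ha hb =>
    obtain ⟨⟨s, t, rfl⟩, s', t', rfl⟩ := ha, hb
    exact ⟨s + s', t + t', by push_cast; ring⟩
  | mul a b _ _ ha hb =>
    obtain ⟨⟨s, t, rfl⟩, s', t', rfl⟩ := ha, hb
    refine ⟨s * s' - d * t * t', s * t' + t * s', ?_⟩
    push_cast
    linear_combination (t * t' : K) * h.sq_eq

theorem map_sq (h : IsSqrtNegGenerator d α) (φ : K →+* ℂ) : φ α ^ 2 = -(d : ℂ) := by
  rw [← map_pow, h.sq_eq, map_neg, map_natCast]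

theorem conj_map (h : IsSqrtNegGenerator d α) (φ : K →+* ℂ) :
    (starRingEnd ℂ) (φ α) = -φ α := by
  have hre : (φ α).re * (φ α).re - (φ α).im * (φ α).im = -(d : ℝ) := by
    simpa [pow_two] using congrArg Complex.re (h.map_sq φ)
  have him : (φ α).re * (φ α).im + (φ α).im * (φ α).re = 0 := by
    simpa [pow_two] using congrArg Complex.im (h.map_sq φ)
  have hzero : (φ α).re = 0 := by
    rcases mul_eq_zero.1 (show (φ α).re * (φ α).im = 0 by linarith) with hr | hi
    · exact hr
    · nlinarith [mul_self_nonneg (φ α).re, (Nat.cast_nonneg d : (0 : ℝ) ≤ d)]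
  apply Complex.ext <;> simp [hzero]

theorem conj_map_repr (h : IsSqrtNegGenerator d α) (φ : K →+* ℂ) (s t : ℚ) :
    (starRingEnd ℂ) (φ (s + t * α)) = φ (s - t * α) := by
  simp only [map_add, map_mul, map_sub, map_ratCast, h.conj_map]
  ring

theorem normSq_map (h : IsSqrtNegGenerator d α) (φ : K →+* ℂ) (s t : ℚ) :
    Complex.normSq (φ (s + t * α)) = s ^ 2 + d * t ^ 2 := by
  have hC : ((Complex.normSq (φ (s + t * α)) : ℝ) : ℂ) = s ^ 2 + d * t ^ 2 := by
    rw [Complex.normSq_eq_conj_mul_self, h.conj_map_repr]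
    simp only [map_add, map_mul, map_sub, map_ratCast]
    linear_combination (-t ^ 2 : ℂ) * h.map_sq φ
  exact_mod_cast hC

theorem four_mul_normSq_map (h : IsSqrtNegGenerator d α) {x : K} {a b : ℤ}
    (hx : 2 * x = a + b * α) (φ : K →+* ℂ) :
    4 * Complex.normSq (φ x) = (a : ℝ) ^ 2 + d * (b : ℝ) ^ 2 := by
  have hnorm := h.normSq_map φ a b
  rw [show ((a : ℚ) : K) + ((b : ℚ) : K) * α = 2 * x by rw [hx]; push_cast; rfl, map_mul,
    map_mul, map_ofNat, Complex.normSq_ofNat] at hnorm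
  push_cast at hnorm
  linarith

theorem isIntegral_conj (h : IsSqrtNegGenerator d α) {s t : ℚ}
    (hx : IsIntegral ℤ (s + t * α : K)) : IsIntegral ℤ (s - t * α : K) := by
  obtain ⟨φ⟩ : Nonempty (K →+* ℂ) := inferInstance
  have hφ : IsIntegral ℤ (φ (s - t * α)) := by
    rw [← h.conj_map_repr φ s t]
    exact (hx.map φ.toIntAlgHom).map (starRingEnd ℂ).toIntAlgHom
  exact (isIntegral_algHom_iff φ.toIntAlgHom φ.injective).1 hφ

theorem exists_int_repr (h : IsSqrtNegGenerator d α) (hd : Squarefree d) {x : K}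
    (hx : IsIntegral ℤ x) : ∃ a b : ℤ, 2 * x = a + b * α := by
  obtain ⟨s, t, rfl⟩ := h.exists_rat_repr x
  have hconj := h.isIntegral_conj hx
  obtain ⟨a, ha⟩ := exists_int_of_isIntegral_ratCast (K := K) (r := 2 * s) (by
    rw [show ((2 * s : ℚ) : K) = s + t * α + (s - t * α) by push_cast; ring]
    exact hx.add hconj)
  obtain ⟨n, hn⟩ := exists_int_of_isIntegral_ratCast (K := K) (r := -(d * (2 * t) ^ 2)) (by
    rw [show ((-(d * (2 * t) ^ 2) : ℚ) : K) = (s + t * α - (s - t * α)) ^ 2 by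
      push_cast; linear_combination (-4 * t ^ 2 : K) * h.sq_eq]
    exact (hx.sub hconj).pow 2)
  obtain ⟨b, hb⟩ := exists_int_of_squarefree_mul_sq hd (r := 2 * t) (n := -n) (by
    push_cast; rw [← hn, neg_neg])
  refine ⟨a, b, ?_⟩
  have ha' : (2 * s : K) = a := by exact_mod_cast congrArg (Rat.cast : ℚ → K) ha
  have hb' : (2 * t : K) = b := by exact_mod_cast congrArg (Rat.cast : ℚ → K) hb
  linear_combination ha' + α * hb'

theorem exists_natCast_eq_normSq (h : IsSqrtNegGenerator d α) {x : K} (hx : IsIntegral ℤ x) :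
    ∃ N : ℕ, ∀ φ : K →+* ℂ, Complex.normSq (φ x) = N := by
  obtain ⟨s, t, rfl⟩ := h.exists_rat_repr x
  obtain ⟨N, hN⟩ := exists_int_of_isIntegral_ratCast (K := K) (r := s ^ 2 + d * t ^ 2) (by
    rw [show ((s ^ 2 + d * t ^ 2 : ℚ) : K) = (s + t * α) * (s - t * α) by
      push_cast; linear_combination (t ^ 2 : K) * h.sq_eq]
    exact hx.mul (h.isIntegral_conj hx))
  lift N to ℕ using by
    have : (0 : ℚ) ≤ N := hN ▸ by positivity
    exact_mod_cast this
  exact ⟨N, fun φ => by rw [h.normSq_map]; exact_mod_cast congrArg (Rat.cast : ℚ → ℝ) hN⟩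

theorem coe_unit_eq_one_or_neg_one (h : IsSqrtNegGenerator d α) (hd : Squarefree d)
    (hd4 : 4 < d) (v : (𝓞 K)ˣ) : ((v : 𝓞 K) : K) = 1 ∨ ((v : 𝓞 K) : K) = -1 := by
  obtain ⟨φ⟩ : Nonempty (K →+* ℂ) := inferInstance
  obtain ⟨a, b, hab⟩ := h.exists_int_repr hd (v : 𝓞 K).isIntegral_coe
  obtain ⟨N, hN⟩ := h.exists_natCast_eq_normSq (v : 𝓞 K).isIntegral_coe
  obtain ⟨N', hN'⟩ := h.exists_natCast_eq_normSq ((v⁻¹ : (𝓞 K)ˣ) : 𝓞 K).isIntegral_coe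
  have hNN' : N * N' = 1 := by
    have : (N * N' : ℝ) = 1 := by
      rw [← hN φ, ← hN' φ, ← Complex.normSq_mul, ← map_mul, ← map_mul]
      simp
    exact_mod_cast this
  have hform : a ^ 2 + d * b ^ 2 = 4 := by
    have := h.four_mul_normSq_map hab φ
    rw [hN φ, Nat.eq_one_of_mul_eq_one_right hNN', Nat.cast_one, mul_one] at this
    exact_mod_cast this.symm
  obtain rfl : b = 0 := by
    by_contra hb
    have hb2 : 0 < b ^ 2 := by positivity
    nlinarith [sq_nonneg a, (by exact_mod_cast hd4 : (4 : ℤ) < d)]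
  have ha : (a - 2) * (a + 2) = 0 := by linarith
  have htwo : (2 : K) ≠ 0 := two_ne_zero
  rcases mul_eq_zero.1 ha with ha | ha
  · left
    rw [sub_eq_zero.1 ha] at hab
    exact mul_left_cancel₀ htwo (by rw [hab]; push_cast; ring)
  · right
    rw [eq_neg_of_add_eq_zero_left ha] at hab
    exact mul_left_cancel₀ htwo (by rw [hab]; push_cast; ring)

end IsSqrtNegGenerator

/-! ### Discriminants -/

section Discriminant

variable {K : Type*} [Field K] [NumberField K] {ι : Type*} [Fintype ι] [DecidableEq ι]

theorem discr_dvd_algebra_discr (b : Module.Basis ι ℤ (𝓞 K)) (v : ι → 𝓞 K) :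
    discr K ∣ Algebra.discr ℤ v := by
  have h := Algebra.discr_of_matrix_vecMul (A := ℤ) b (b.toMatrix v)
  rw [b.toMatrix_map_vecMul, discr_eq_discr K b] at h
  exact h ▸ dvd_mul_left _ _

theorem algebra_discr_dvd_of_smul_mem_span (b : Module.Basis ι ℤ (𝓞 K)) (v : ι → 𝓞 K) {n : ℤ}
    (hv : ∀ x : 𝓞 K, n • x ∈ Submodule.span ℤ (Set.range v)) :
    Algebra.discr ℤ v ∣ n ^ (2 * Fintype.card ι) * discr K := by
  choose Q hQ using fun i => (Submodule.mem_span_range_iff_exists_fun ℤ).1 (hv (b i))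
  have hmul : ((Matrix.diagonal fun _ : ι => n).map (algebraMap ℤ (𝓞 K))).mulVec b =
      ((Matrix.of Q).map (algebraMap ℤ (𝓞 K))).mulVec v := by
    funext i
    simpa [Matrix.mulVec, dotProduct, Matrix.diagonal_apply] using (hQ i).symm
  have hb := Algebra.discr_of_matrix_mulVec (A := ℤ) b (Matrix.diagonal fun _ : ι => n)
  rw [hmul, Algebra.discr_of_matrix_mulVec, discr_eq_discr K b, Matrix.det_diagonal,
    Finset.prod_const, Finset.card_univ, ← pow_mul, mul_comm _ 2] at hb
  exact hb ▸ dvd_mul_left _ _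

end Discriminant

namespace IsSqrtNegGenerator

variable {K : Type*} [Field K] [NumberField K] {d : ℕ} {α : K}

theorem isIntegral (h : IsSqrtNegGenerator d α) : IsIntegral ℤ α := by
  refine IsIntegral.of_pow two_pos ?_
  rw [h.sq_eq]
  simpa only [algebraMap_int_eq, eq_intCast, Int.cast_neg, Int.cast_natCast] using
    isIntegral_algebraMap (R := ℤ) (A := K) (x := -(d : ℤ))

/-- The generator as an algebraic integer. -/
def gen (h : IsSqrtNegGenerator d α) : 𝓞 K := ⟨α, h.isIntegral⟩

theorem coe_gen (h : IsSqrtNegGenerator d α) : (h.gen : K) = α := rfl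

theorem gen_sq (h : IsSqrtNegGenerator d α) : h.gen ^ 2 = -(d : 𝓞 K) :=
  RingOfIntegers.ext (by simpa [coe_gen] using h.sq_eq)

theorem minpoly_eq (h : IsSqrtNegGenerator d α) (hd : 0 < d) :
    minpoly ℚ α = Polynomial.X ^ 2 - Polynomial.C (-(d : ℚ)) := by
  refine (minpoly.eq_of_irreducible_of_monic ?_ (by simp [h.sq_eq])
    (Polynomial.monic_X_pow_sub_C _ two_ne_zero)).symm
  refine X_pow_sub_C_irreducible_of_prime Nat.prime_two fun r hr => ?_
  have : (0 : ℚ) < d := by exact_mod_cast hd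
  nlinarith [sq_nonneg r]

theorem finrank_eq_two (h : IsSqrtNegGenerator d α) (hd : 0 < d) : Module.finrank ℚ K = 2 := by
  let pb := PowerBasis.ofAdjoinEqTop (h.isIntegral.tower_top (A := ℚ)) h.adjoin_eq_top
  rw [pb.finrank, ← pb.natDegree_minpoly, PowerBasis.ofAdjoinEqTop_gen, h.minpoly_eq hd,
    Polynomial.natDegree_X_pow_sub_C]

theorem trace_eq_zero (h : IsSqrtNegGenerator d α) (hd : 0 < d) : Algebra.trace ℚ K α = 0 := by
  let pb := PowerBasis.ofAdjoinEqTop (h.isIntegral.tower_top (A := ℚ)) h.adjoin_eq_top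
  have htr := pb.trace_gen_eq_nextCoeff_minpoly
  rwa [PowerBasis.ofAdjoinEqTop_gen, h.minpoly_eq hd, Polynomial.nextCoeff_of_natDegree_pos (by
    rw [Polynomial.natDegree_X_pow_sub_C]; exact two_pos), Polynomial.natDegree_X_pow_sub_C,
    Polynomial.coeff_sub, Polynomial.coeff_X_pow, Polynomial.coeff_C_of_ne_zero (by norm_num),
    if_neg (by norm_num), sub_zero, neg_zero] at htr

theorem algebra_discr_eq (h : IsSqrtNegGenerator d α) (hd : 0 < d) :
    Algebra.discr ℤ ![1, h.gen] = -4 * d := by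
  have htrα : Algebra.trace ℤ (𝓞 K) h.gen = 0 := by
    have := Algebra.coe_trace_int (K := K) h.gen
    rw [h.coe_gen, h.trace_eq_zero hd] at this
    exact_mod_cast this
  have htr (n : ℤ) : Algebra.trace ℤ (𝓞 K) n = 2 * n := by
    have := Algebra.trace_algebraMap (S := 𝓞 K) n
    rwa [RingOfIntegers.rank, h.finrank_eq_two hd, nsmul_eq_mul, algebraMap_int_eq,
      eq_intCast] at this
  have htr1 : Algebra.trace ℤ (𝓞 K) 1 = 2 := by exact_mod_cast htr 1
  have htrd : Algebra.trace ℤ (𝓞 K) (-(d : 𝓞 K)) = 2 * -d := by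
    simpa only [Int.cast_neg, Int.cast_natCast] using htr (-d)
  rw [Algebra.discr_def, Matrix.det_fin_two]
  simp only [Algebra.traceMatrix_apply, Algebra.traceForm_apply, Matrix.cons_val_zero,
    Matrix.cons_val_one, Matrix.cons_val_fin_one, mul_one, one_mul, ← sq h.gen, h.gen_sq,
    htrα, htr1, htrd]
  ring

theorem exists_integral_basis (h : IsSqrtNegGenerator d α) (hd : 0 < d) :
    Nonempty (Module.Basis (Fin 2) ℤ (𝓞 K)) := by
  have hc : Fintype.card (Module.Free.ChooseBasisIndex ℤ (𝓞 K)) = 2 := by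
    rw [← Module.finrank_eq_card_chooseBasisIndex, RingOfIntegers.rank, h.finrank_eq_two hd]
  exact ⟨(RingOfIntegers.basis K).reindex (Fintype.equivFinOfCardEq hc)⟩

theorem abs_discr_le (h : IsSqrtNegGenerator d α) (hd : 0 < d) : |discr K| ≤ 4 * d := by
  obtain ⟨b⟩ := h.exists_integral_basis hd
  have hdvd := discr_dvd_algebra_discr b ![1, h.gen]
  rw [h.algebra_discr_eq hd, neg_mul, dvd_neg, ← abs_dvd] at hdvd
  exact Int.le_of_dvd (by positivity) hdvd

theorem le_four_mul_abs_discr (h : IsSqrtNegGenerator d α) (hd : Squarefree d) :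
    (d : ℤ) ≤ 4 * |discr K| := by
  have hd0 : 0 < d := Nat.pos_of_ne_zero hd.ne_zero
  obtain ⟨b⟩ := h.exists_integral_basis hd0
  have hdvd := algebra_discr_dvd_of_smul_mem_span b ![1, h.gen] (n := 2)
    fun x => by
      obtain ⟨s, t, hst⟩ := h.exists_int_repr hd x.isIntegral_coe
      rw [Matrix.range_cons, Matrix.range_cons, Matrix.range_empty, Set.union_empty,
        Set.singleton_union, Submodule.mem_span_pair]
      exact ⟨s, t, RingOfIntegers.ext (by simpa [coe_gen, two_mul] using hst.symm)⟩
  rw [h.algebra_discr_eq hd0, neg_mul, neg_dvd, ← dvd_abs, abs_mul] at hdvd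
  have := Int.le_of_dvd (by have := discr_ne_zero K; positivity) hdvd
  norm_num at this
  linarith

end IsSqrtNegGenerator

theorem exists_isSqrtNegGenerator (d : ℕ) :
    ∃ (K : Type) (_ : Field K) (_ : NumberField K) (α : K), IsSqrtNegGenerator d α := by
  obtain ⟨z, hz⟩ := IsAlgClosed.exists_pow_nat_eq (-(d : ℂ)) two_pos
  have hint : IsIntegral ℚ z := by
    refine IsIntegral.of_pow two_pos ?_
    rw [hz]
    simpa using isIntegral_algebraMap (R := ℚ) (A := ℂ) (x := -(d : ℚ))
  have := IntermediateField.adjoin.finiteDimensional hint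
  have : NumberField (IntermediateField.adjoin ℚ {z}) :=
    { to_charZero := inferInstance, to_finiteDimensional := inferInstance }
  refine ⟨IntermediateField.adjoin ℚ {z}, inferInstance, this,
    IntermediateField.AdjoinSimple.gen ℚ z, Subtype.ext (by simp [hz]), ?_⟩
  have htop := (IntermediateField.adjoin.powerBasis hint).adjoin_gen_eq_top
  rw [IntermediateField.adjoin.powerBasis_gen] at htop
  have halg : (IntermediateField.algebra' _ : Algebra ℚ (IntermediateField.adjoin ℚ {z})) =
    DivisionRing.toRatAlgebra := Subsingleton.elim _ _
  exact halg ▸ htop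

/-! ### Squares of `√k x + √(-l) y` -/

/-- The square of `√k x + √(-l) y`, where `a` stands for the product `√k √(-l)`. -/
def rootSq {R : Type*} [CommRing R] (a : R) (k l : ℕ) (x y : ℤ) : R :=
  ((k * x ^ 2 - l * y ^ 2 : ℤ) : R) + ((2 * x * y : ℤ) : R) * a

/-- The form `k x² + l y²` represents the `p`-th power of `w > 1`, with `w` prime to `2 k x`. -/
structure PowerRep (k l p : ℕ) (x y : ℤ) (w : ℕ) : Prop where
  form_eq : (k : ℤ) * x ^ 2 + l * y ^ 2 = (w : ℤ) ^ p
  isCoprime : IsCoprime (w : ℤ) (2 * k * x)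
  one_lt : 1 < w

section RootSq

variable {R : Type*} [CommRing R] {a : R} {k l : ℕ}

theorem natCast_mul_rootSq (ha : a ^ 2 = -((k * l : ℕ) : R)) (x y : ℤ) :
    k * rootSq a k l x y = (k * x + y * a) ^ 2 := by
  push_cast [rootSq] at ha ⊢
  linear_combination (-(y : R) ^ 2) * ha

theorem rootSq_mul_rootSq_neg (ha : a ^ 2 = -((k * l : ℕ) : R)) (x y : ℤ) :
    rootSq a k l x y * rootSq a k l (-x) y = ((k * x ^ 2 + l * y ^ 2 : ℤ) : R) ^ 2 := by
  push_cast [rootSq] at ha ⊢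
  linear_combination (-4 * (x : R) ^ 2 * y ^ 2) * ha

end RootSq

namespace PowerRep

variable {k l p : ℕ} {x y : ℤ} {w : ℕ}

theorem neg (P : PowerRep k l p x y w) : PowerRep k l p (-x) y w where
  form_eq := by rw [neg_sq, P.form_eq]
  isCoprime := by rw [mul_neg]; exact P.isCoprime.neg_right
  one_lt := P.one_lt

theorem rootSq_mul_rootSq_neg {R : Type*} [CommRing R] {a : R} (P : PowerRep k l p x y w)
    (ha : a ^ 2 = -((k * l : ℕ) : R)) :
    rootSq a k l x y * rootSq a k l (-x) y = ((w : R) ^ 2) ^ p := by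
  rw [_root_.rootSq_mul_rootSq_neg ha, P.form_eq]
  push_cast
  ring

theorem isCoprime_rootSq {R : Type*} [CommRing R] {a : R} (P : PowerRep k l p x y w)
    (ha : a ^ 2 = -((k * l : ℕ) : R)) :
    IsCoprime (rootSq a k l x y) (rootSq a k l (-x) y) := by
  have hk : IsCoprime ((w : ℤ) ^ p) (4 * k * x ^ 2) := by
    have h2k := P.isCoprime.of_mul_right_left
    have hfour : IsCoprime (w : ℤ) (2 * 2) :=
      h2k.of_mul_right_left.mul_right h2k.of_mul_right_left
    exact ((hfour.mul_right h2k.of_mul_right_right).mul_right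
      P.isCoprime.of_mul_right_right.pow_right).pow_left
  obtain ⟨s, t, hst⟩ : IsCoprime (((w : ℤ) ^ p) ^ 2) (4 * k * x ^ 2 - 2 * (w : ℤ) ^ p) := by
    rw [show 4 * (k : ℤ) * x ^ 2 - 2 * (w : ℤ) ^ p = 4 * k * x ^ 2 + (w : ℤ) ^ p * -2 by ring]
    exact (hk.add_mul_left_right (-2)).pow_left
  have hst' := congrArg (Int.cast : ℤ → R) hst
  have hprod := P.rootSq_mul_rootSq_neg ha
  have hsum : rootSq a k l x y + rootSq a k l (-x) y =
      ((4 * k * x ^ 2 - 2 * (w : ℤ) ^ p : ℤ) : R) := by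
    rw [← P.form_eq]
    push_cast [rootSq]
    ring
  push_cast at hst' hsum
  refine ⟨s * rootSq a k l (-x) y + t, t, ?_⟩
  linear_combination hst' + s * hprod + t * hsum

end PowerRep

namespace IsSqrtNegGenerator

variable {K : Type*} [Field K] [NumberField K]

section General

variable {d : ℕ} {α : K}

theorem ne_ratCast_of_isCoprime_conj (h : IsSqrtNegGenerator d α) (hd : Squarefree d)
    (hd4 : 4 < d) {G G' : 𝓞 K} (hcop : IsCoprime G G') (φ : K →+* ℂ)
    (hconj : (starRingEnd ℂ) (φ G) = φ G') (hnorm : Complex.normSq (φ G) ≠ 1) (r : ℚ) :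
    (G : K) ≠ r := by
  intro hr
  have hGG' : G = G' := RingOfIntegers.ext (φ.injective (by
    rw [← hconj, hr, map_ratCast, map_ratCast]))
  rw [← hGG', isCoprime_self] at hcop
  obtain ⟨v, rfl⟩ := hcop
  apply hnorm
  rcases h.coe_unit_eq_one_or_neg_one hd hd4 v with hv | hv <;> simp [hv]

theorem exists_pow_eq_of_associated (h : IsSqrtNegGenerator d α) (hd : Squarefree d)
    (hd4 : 4 < d) {p : ℕ} (hp : Odd p) {η G : 𝓞 K} (hη : Associated (η ^ p) G) :
    ∃ η' : 𝓞 K, η' ^ p = G := by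
  obtain ⟨v, rfl⟩ := hη
  rcases h.coe_unit_eq_one_or_neg_one hd hd4 v with hv | hv
  · exact ⟨η, by rw [RingOfIntegers.ext (x := (v : 𝓞 K)) (y := 1) hv, mul_one]⟩
  · refine ⟨-η, ?_⟩
    rw [RingOfIntegers.ext (x := (v : 𝓞 K)) (y := -1) (by simpa using hv), hp.neg_pow, mul_neg_one]

theorem exists_sqrt_repr (h : IsSqrtNegGenerator d α) (hd : Squarefree d) {p n M : ℕ}
    (hp : Odd p) {η : 𝓞 K} (hη : η ≠ 0) {B : K} (hB : n * (η : K) ^ p = B ^ 2) {φ : K →+* ℂ}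
    (hM : Complex.normSq (φ η) = (M : ℝ) ^ 2) :
    ∃ (θ : K) (b c : ℤ), θ ^ 2 = n * η ∧ 2 * θ = b + c * α ∧ b ^ 2 + d * c ^ 2 = 4 * (n * M) := by
  obtain ⟨j, rfl⟩ := hp
  have hηK : (η : K) ≠ 0 := RingOfIntegers.coe_ne_zero_iff.2 hη
  have hθ : (B / (η : K) ^ j) ^ 2 = n * η := by
    rw [div_pow, ← hB]
    field_simp
    ring
  have hint : IsIntegral ℤ (B / (η : K) ^ j) := by
    refine IsIntegral.of_pow two_pos (hθ ▸ ?_)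
    exact (isIntegral_natCast n).mul η.isIntegral_coe
  obtain ⟨b, c, hbc⟩ := h.exists_int_repr hd hint
  refine ⟨_, b, c, hθ, hbc, ?_⟩
  have hnorm : Complex.normSq (φ (B / (η : K) ^ j)) = n * M := by
    refine (pow_left_inj₀ (Complex.normSq_nonneg _) (by positivity) two_ne_zero).1 ?_
    rw [← map_pow, ← map_pow, hθ, map_mul, map_mul, hM, map_natCast, Complex.normSq_natCast]
    ring
  have hform := h.four_mul_normSq_map hbc φ
  rw [hnorm] at hform
  exact_mod_cast hform.symm

theorem exists_sq_eq_ratCast (h : IsSqrtNegGenerator d α) {θ : K} {b c : ℤ}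
    (hθ : 2 * θ = b + c * α) (hbc : b = 0 ∨ c = 0) : ∃ r : ℚ, θ ^ 2 = r := by
  rcases hbc with rfl | rfl
  · refine ⟨-(c ^ 2 * d / 4), ?_⟩
    rw [Int.cast_zero, zero_add] at hθ
    push_cast
    linear_combination (2 * θ + c * α) / 4 * hθ + (c ^ 2 / 4 : K) * h.sq_eq
  · refine ⟨b ^ 2 / 4, ?_⟩
    rw [Int.cast_zero, zero_mul, add_zero] at hθ
    push_cast
    linear_combination (2 * θ + b) / 4 * hθ

end General

end IsSqrtNegGenerator

theorem eq_zero_or_eq_zero_of_form_eq {k l n M : ℕ} {b c : ℤ} (hkl : Squarefree (k * l))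
    (hM : 4 * M < k) (hn : n = 1 ∨ n = k) (h : b ^ 2 + (k * l : ℕ) * c ^ 2 = 4 * (n * M)) :
    b = 0 ∨ c = 0 := by
  have hl : 0 < l := Nat.pos_of_ne_zero fun hl => by simp [hl] at hkl
  have hM' : (4 * M : ℤ) < k := by exact_mod_cast hM
  push_cast at h
  rcases hn with rfl | rfl
  · right
    by_contra hc
    have : 0 < c ^ 2 := by positivity
    have hlc : 1 ≤ (l : ℤ) * c ^ 2 := by
      have : 0 < (l : ℤ) * c ^ 2 := by positivity
      omega
    push_cast at h
    nlinarith [sq_nonneg b]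
  · left
    have hk : (n : ℤ) ≠ 0 := by omega
    have hdvd : (n : ℤ) ∣ b := by
      have hsq : n ∣ b.natAbs ^ 2 := by
        rw [← Int.natAbs_pow, ← Int.natCast_dvd]
        exact ⟨4 * M - l * c ^ 2, by linarith⟩
      exact Int.natCast_dvd.2
        (((hkl.squarefree_of_dvd ⟨l, rfl⟩).dvd_pow_iff_dvd two_ne_zero).1 hsq)
    obtain ⟨b', rfl⟩ := hdvd
    have hcancel : (n : ℤ) * b' ^ 2 + l * c ^ 2 = 4 * M :=
      mul_left_cancel₀ hk (by linarith)
    by_contra hb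
    have hb' : 0 < b' ^ 2 := by
      have : b' ≠ 0 := right_ne_zero_of_mul hb
      positivity
    have hlc : 0 ≤ (l : ℤ) * c ^ 2 := by positivity
    nlinarith

/-! ### Products of `rootSq`s are not `p`-th powers -/

namespace IsSqrtNegGenerator

variable {K : Type*} [Field K] [NumberField K] {k l : ℕ} {α : K}

theorem conj_map_rootSq (h : IsSqrtNegGenerator (k * l) α) (φ : K →+* ℂ) (x y : ℤ) :
    (starRingEnd ℂ) (φ (rootSq h.gen k l x y : 𝓞 K)) = φ (rootSq h.gen k l (-x) y : 𝓞 K) := by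
  have htwo : algebraMap (𝓞 K) K 2 = 2 := map_ofNat _ 2
  have hconj : (starRingEnd ℂ) (φ 2) = φ 2 := by rw [map_ofNat φ 2]; exact Complex.conj_ofNat 2
  simp [rootSq, coe_gen, h.conj_map φ, htwo, hconj]

theorem normSq_map_rootSq (h : IsSqrtNegGenerator (k * l) α) (φ : K →+* ℂ) {p : ℕ} {x y : ℤ}
    {w : ℕ} (P : PowerRep k l p x y w) :
    Complex.normSq (φ (rootSq h.gen k l x y : 𝓞 K)) = ((w : ℝ) ^ p) ^ 2 := by
  have hC : ((Complex.normSq (φ (rootSq h.gen k l x y : 𝓞 K)) : ℝ) : ℂ) = ((w : ℂ) ^ 2) ^ p := by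
    rw [Complex.normSq_eq_conj_mul_self, h.conj_map_rootSq, mul_comm, ← map_mul, ← map_mul,
      P.rootSq_mul_rootSq_neg h.gen_sq]
    simp
  have hpow : ((w : ℝ) ^ p) ^ 2 = ((w : ℝ) ^ 2) ^ p := by ring
  rw [hpow]
  exact_mod_cast hC

theorem exists_eq_ratCast_of_mul_pow_eq_sq (h : IsSqrtNegGenerator (k * l) α)
    (hkl : Squarefree (k * l)) {p n M : ℕ} (hp : Odd p) {η : 𝓞 K} {φ : K →+* ℂ}
    (hM : Complex.normSq (φ η) = (M : ℝ) ^ 2) (hMk : 4 * M < k) (hn : n = 1 ∨ n = k) {B : K}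
    (hB : n * (η : K) ^ p = B ^ 2) : ∃ r : ℚ, (η : K) = r := by
  rcases eq_or_ne η 0 with rfl | hη
  · exact ⟨0, by simp⟩
  obtain ⟨θ, b, c, hθ, hbc, hform⟩ := h.exists_sqrt_repr hkl hp hη hB hM
  obtain ⟨r, hr⟩ := h.exists_sq_eq_ratCast hbc (eq_zero_or_eq_zero_of_form_eq hkl hMk hn hform)
  have hn0 : (n : K) ≠ 0 := Nat.cast_ne_zero.2 (by omega)
  exact ⟨r / n, by rw [Rat.cast_div, Rat.cast_natCast, eq_div_iff hn0, mul_comm, ← hθ, hr]⟩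

theorem exists_mul_rootSq_pow_mul_rootSq_pow_eq_sq (h : IsSqrtNegGenerator (k * l) α)
    (hk : k ≠ 0) (x₁ y₁ x₂ y₂ : ℤ) (m n : ℕ) : ∃ (e : ℕ) (B : K), (e = 1 ∨ e = k) ∧
      e * ((rootSq h.gen k l x₁ y₁ ^ m * rootSq h.gen k l x₂ y₂ ^ n : 𝓞 K) : K) = B ^ 2 := by
  have : (k : K) ≠ 0 := Nat.cast_ne_zero.2 hk
  have hroot (x y : ℤ) :
      (k : K) * (rootSq h.gen k l x y : 𝓞 K) = (k * x + y * α) ^ 2 := by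
    simpa [coe_gen] using congrArg (algebraMap (𝓞 K) K) (natCast_mul_rootSq h.gen_sq x y)
  set B : K := (k * x₁ + y₁ * α) ^ m * (k * x₂ + y₂ * α) ^ n
  have hB : (k : K) ^ (m + n) *
      ((rootSq h.gen k l x₁ y₁ ^ m * rootSq h.gen k l x₂ y₂ ^ n : 𝓞 K) : K) = B ^ 2 := by
    simp only [map_mul, map_pow, pow_add]
    rw [mul_mul_mul_comm, ← mul_pow, ← mul_pow, hroot, hroot,
      pow_right_comm _ 2 m, pow_right_comm _ 2 n, ← mul_pow]
  rcases Nat.even_or_odd' (m + n) with ⟨j, hj | hj⟩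
  · refine ⟨1, B / k ^ j, Or.inl rfl, ?_⟩
    rw [div_pow, ← hB, hj]
    field_simp
    ring
  · refine ⟨k, B / k ^ j, Or.inr rfl, ?_⟩
    rw [div_pow, ← hB, hj]
    field_simp
    ring

theorem isCoprime_rootSq_pow_mul_rootSq_pow (h : IsSqrtNegGenerator (k * l) α) {p : ℕ}
    {x₁ y₁ x₂ y₂ : ℤ} {w₁ w₂ : ℕ} (P₁ : PowerRep k l p x₁ y₁ w₁) (P₂ : PowerRep k l p x₂ y₂ w₂)
    (hw : Nat.Coprime w₁ w₂) (m n : ℕ) :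
    IsCoprime (rootSq h.gen k l x₁ y₁ ^ m * rootSq h.gen k l x₂ y₂ ^ n)
      (rootSq h.gen k l (-x₁) y₁ ^ m * rootSq h.gen k l (-x₂) y₂ ^ n) := by
  have hcross : IsCoprime (rootSq h.gen k l x₁ y₁ * rootSq h.gen k l (-x₁) y₁)
      (rootSq h.gen k l x₂ y₂ * rootSq h.gen k l (-x₂) y₂) := by
    rw [P₁.rootSq_mul_rootSq_neg h.gen_sq, P₂.rootSq_mul_rootSq_neg h.gen_sq]
    exact hw.cast.pow.pow
  exact ((P₁.isCoprime_rootSq h.gen_sq).pow.mul_right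
    hcross.of_mul_left_left.of_mul_right_right.pow).mul_left
    (hcross.of_mul_left_right.of_mul_right_left.symm.pow.mul_right
      (P₂.isCoprime_rootSq h.gen_sq).pow)

theorem pow_ne_rootSq_pow_mul_rootSq_pow (h : IsSqrtNegGenerator (k * l) α)
    (hkl : Squarefree (k * l)) {p : ℕ} (hp : Odd p)
    {x₁ y₁ x₂ y₂ : ℤ} {w₁ w₂ : ℕ} (P₁ : PowerRep k l p x₁ y₁ w₁) (P₂ : PowerRep k l p x₂ y₂ w₂)
    (hw : Nat.Coprime w₁ w₂) {m n : ℕ} (hmn : m ≠ 0 ∨ n ≠ 0)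
    (hk : 4 * (w₁ ^ m * w₂ ^ n) < k) (η : 𝓞 K) :
    η ^ p ≠ rootSq h.gen k l x₁ y₁ ^ m * rootSq h.gen k l x₂ y₂ ^ n := by
  intro hη
  obtain ⟨φ⟩ : Nonempty (K →+* ℂ) := inferInstance
  have hM1 : 1 < w₁ ^ m * w₂ ^ n := by
    have hw₁ := P₁.one_lt
    have hw₂ := P₂.one_lt
    rcases hmn with hm | hn
    · exact (Nat.one_lt_pow hm hw₁).trans_le (Nat.le_mul_of_pos_right _ (by positivity))
    · exact (Nat.one_lt_pow hn hw₂).trans_le (Nat.le_mul_of_pos_left _ (by positivity))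
  have hd4 : 4 < k * l := by
    have hl : 0 < l := Nat.pos_of_ne_zero fun hl => by simp [hl] at hkl
    nlinarith
  have hnorm : Complex.normSq (φ ((η ^ p : 𝓞 K) : K)) =
      (((w₁ ^ m * w₂ ^ n : ℕ) : ℝ) ^ 2) ^ p := by
    simp only [hη, map_mul, map_pow, h.normSq_map_rootSq φ P₁, h.normSq_map_rootSq φ P₂]
    push_cast
    ring
  have hnormη : Complex.normSq (φ η) = ((w₁ ^ m * w₂ ^ n : ℕ) : ℝ) ^ 2 := by
    simp only [map_pow] at hnorm
    exact (pow_left_inj₀ (Complex.normSq_nonneg _) (by positivity) hp.pos.ne').1 hnorm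
  obtain ⟨e, B, he, hB⟩ :=
    h.exists_mul_rootSq_pow_mul_rootSq_pow_eq_sq (by omega) x₁ y₁ x₂ y₂ m n
  rw [← hη, RingOfIntegers.coe_eq_algebraMap, map_pow] at hB
  obtain ⟨r, hr⟩ := h.exists_eq_ratCast_of_mul_pow_eq_sq hkl hp hnormη hk he hB
  refine h.ne_ratCast_of_isCoprime_conj hkl hd4
    (h.isCoprime_rootSq_pow_mul_rootSq_pow P₁ P₂ hw m n) φ ?_ ?_ (r ^ p) ?_
  · simp only [map_mul, map_pow, h.conj_map_rootSq]
  · rw [← hη, hnorm]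
    have hM1' : (1 : ℝ) < (w₁ ^ m * w₂ ^ n : ℕ) := by exact_mod_cast hM1
    exact (one_lt_pow₀ (one_lt_pow₀ hM1' two_ne_zero) hp.pos.ne').ne'
  · rw [← hη, Rat.cast_pow, ← hr]
    exact map_pow (algebraMap (𝓞 K) K) η p

end IsSqrtNegGenerator

/-! ### Ideal classes of `p`-th roots -/

open scoped nonZeroDivisors

section RootClass

variable {K : Type*} [Field K] [NumberField K]

/-- `c` is the class of an ideal whose `p`-th power is the principal ideal `(γ)`. -/
def IsRootClass (p : ℕ) (γ : 𝓞 K) (c : ClassGroup (𝓞 K)) : Prop :=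
  ∃ I : (Ideal (𝓞 K))⁰, (I : Ideal (𝓞 K)) ^ p = Ideal.span {γ} ∧ ClassGroup.mk0 I = c

variable {p : ℕ} {γ γ' : 𝓞 K} {c c' : ClassGroup (𝓞 K)}

theorem IsRootClass.pow_eq_one (h : IsRootClass p γ c) : c ^ p = 1 := by
  obtain ⟨I, hI, rfl⟩ := h
  rw [← map_pow, ClassGroup.mk0_eq_one_iff, SubmonoidClass.coe_pow, hI]
  exact ⟨⟨γ, rfl⟩⟩

theorem IsRootClass.mul (h : IsRootClass p γ c) (h' : IsRootClass p γ' c') :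
    IsRootClass p (γ * γ') (c * c') := by
  obtain ⟨⟨I, hI, rfl⟩, J, hJ, rfl⟩ := h, h'
  exact ⟨I * J, by
    rw [Submonoid.coe_mul, mul_pow, hI, hJ, Ideal.span_singleton_mul_span_singleton],
    map_mul _ _ _⟩

theorem IsRootClass.pow (h : IsRootClass p γ c) (n : ℕ) : IsRootClass p (γ ^ n) (c ^ n) := by
  obtain ⟨I, hI, rfl⟩ := h
  exact ⟨I ^ n, by
    rw [SubmonoidClass.coe_pow, ← pow_mul, mul_comm, pow_mul, hI, Ideal.span_singleton_pow],
    map_pow _ _ _⟩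

theorem IsRootClass.exists_associated_pow (h : IsRootClass p γ 1) :
    ∃ η : 𝓞 K, Associated (η ^ p) γ := by
  obtain ⟨I, hI, hI1⟩ := h
  rw [ClassGroup.mk0_eq_one_iff] at hI1
  obtain ⟨⟨η, hη⟩⟩ := hI1
  refine ⟨η, ?_⟩
  rw [← Ideal.span_singleton_eq_span_singleton, ← Ideal.span_singleton_pow, ← hI, hη]

theorem exists_isRootClass_of_mul_eq_pow (hp : p ≠ 0) {z : 𝓞 K} (hz : z ≠ 0)
    (hcop : IsCoprime γ γ') (hmul : γ * γ' = z ^ p) :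
    ∃ c : ClassGroup (𝓞 K), IsRootClass p γ c ∧ IsRootClass p γ' c⁻¹ := by
  have hprod : Ideal.span {γ} * Ideal.span {γ'} = Ideal.span {z} ^ p := by
    rw [Ideal.span_singleton_mul_span_singleton, Ideal.span_singleton_pow, hmul]
  have hcop' : IsCoprime (Ideal.span {γ}) (Ideal.span {γ'}) :=
    (Ideal.isCoprime_span_singleton_iff _ _).2 hcop
  obtain ⟨I, hI⟩ := exists_eq_pow_of_mul_eq_pow_of_coprime hcop' hprod
  obtain ⟨J, hJ⟩ := exists_eq_pow_of_mul_eq_pow_of_coprime hcop'.symm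
    (by rw [mul_comm]; exact hprod)
  have hIJ : I * J = Ideal.span {z} := by
    rw [hI, hJ, ← mul_pow] at hprod
    exact (pow_left_inj hp).1 hprod
  have hIJ0 : I * J ≠ 0 := by
    rw [hIJ]
    exact mt Ideal.span_singleton_eq_bot.1 hz
  let I₀ : (Ideal (𝓞 K))⁰ := ⟨I, mem_nonZeroDivisors_of_ne_zero (left_ne_zero_of_mul hIJ0)⟩
  let J₀ : (Ideal (𝓞 K))⁰ := ⟨J, mem_nonZeroDivisors_of_ne_zero (right_ne_zero_of_mul hIJ0)⟩
  refine ⟨ClassGroup.mk0 I₀, ⟨I₀, hI.symm, rfl⟩, J₀, hJ.symm, ?_⟩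
  rw [eq_inv_iff_mul_eq_one, mul_comm, ← map_mul, ClassGroup.mk0_eq_one_iff]
  exact ⟨⟨z, hIJ⟩⟩

theorem exists_isRootClass_zpow {k l : ℕ} {α : K} (h : IsSqrtNegGenerator (k * l) α)
    (hp : p ≠ 0) {x y : ℤ} {w : ℕ} (P : PowerRep k l p x y w) :
    ∃ c : ClassGroup (𝓞 K), c ^ p = 1 ∧ ∀ z : ℤ, ∃ x' : ℤ, PowerRep k l p x' y w ∧
      IsRootClass p (rootSq h.gen k l x' y ^ z.natAbs) (c ^ z) := by
  have hw : ((w : 𝓞 K) ^ 2) ≠ 0 := pow_ne_zero _ (Nat.cast_ne_zero.2 (by have := P.one_lt; omega))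
  obtain ⟨c, hc, hc'⟩ := exists_isRootClass_of_mul_eq_pow hp hw (P.isCoprime_rootSq h.gen_sq)
    (P.rootSq_mul_rootSq_neg h.gen_sq)
  refine ⟨c, hc.pow_eq_one, fun z => ?_⟩
  rcases Int.natAbs_eq z with hz | hz
  · exact ⟨x, P, by rw [hz, zpow_natCast, Int.natAbs_natCast]; exact hc.pow _⟩
  · exact ⟨-x, P.neg, by
      rw [hz, zpow_neg, zpow_natCast, ← inv_pow, Int.natAbs_neg, Int.natAbs_natCast]
      exact hc'.pow _⟩

theorem IsSqrtNegGenerator.exists_subgroup_classGroup_mulEquiv {k l : ℕ} {α : K}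
    (h : IsSqrtNegGenerator (k * l) α) (hkl : Squarefree (k * l)) (hp : p.Prime) (hp2 : p ≠ 2)
    {x₁ y₁ x₂ y₂ : ℤ} {w₁ w₂ W : ℕ} (P₁ : PowerRep k l p x₁ y₁ w₁)
    (P₂ : PowerRep k l p x₂ y₂ w₂) (hw : Nat.Coprime w₁ w₂) (hw₁ : w₁ ≤ W) (hw₂ : w₂ ≤ W)
    (hk : 4 * W ^ max 3 (p - 4) < k) :
    ∃ H : Subgroup (ClassGroup (𝓞 K)), Nonempty (H ≃* Multiplicative (ZMod p × ZMod p)) := by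
  obtain ⟨c₁, hc₁, hroot₁⟩ := exists_isRootClass_zpow h hp.ne_zero P₁
  obtain ⟨c₂, hc₂, hroot₂⟩ := exists_isRootClass_zpow h hp.ne_zero P₂
  refine exists_subgroup_mulEquiv_prod_of_independent hc₁ hc₂ fun x y =>
    dvd_of_zpow_mul_zpow_eq_one hp hc₁ hc₂ fun x y hxy hshort hrel => ?_
  obtain ⟨x₁', P₁', hx⟩ := hroot₁ x
  obtain ⟨x₂', P₂', hy⟩ := hroot₂ y
  obtain ⟨η, hη⟩ := (hrel ▸ hx.mul hy).exists_associated_pow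
  have hM : 4 * (w₁ ^ x.natAbs * w₂ ^ y.natAbs) < k := by
    refine lt_of_le_of_lt (Nat.mul_le_mul_left 4 ?_) hk
    calc w₁ ^ x.natAbs * w₂ ^ y.natAbs ≤ W ^ x.natAbs * W ^ y.natAbs := by gcongr
      _ = W ^ (x.natAbs + y.natAbs) := (pow_add _ _ _).symm
      _ ≤ W ^ max 3 (p - 4) := Nat.pow_le_pow_right (P₁.one_lt.le.trans hw₁) hshort
  have hodd : Odd p := hp.odd_of_ne_two hp2
  have hd4 : 4 < k * l := by
    have hl : 0 < l := Nat.pos_of_ne_zero fun hl => by simp [hl] at hkl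
    have hpos : 0 < w₁ ^ x.natAbs * w₂ ^ y.natAbs := Nat.mul_pos
      (pow_pos (by have := P₁.one_lt; omega) _) (pow_pos (by have := P₂.one_lt; omega) _)
    nlinarith
  obtain ⟨η', hη'⟩ := h.exists_pow_eq_of_associated hkl hd4 hodd hη
  exact h.pow_ne_rootSq_pow_mul_rootSq_pow hkl hodd P₁' P₂' hw (by simpa using hxy) hM η' hη'

end RootClass

/-! ### Discriminants with a class group of rank at least two -/

/-- The class group of `ℚ(√-d)` contains a copy of `(ℤ/p)²`, for a squarefree positive `d`. -/
def HasClassRankTwo (p d : ℕ) : Prop :=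
  Squarefree d ∧ ∀ (K : Type) [Field K] [NumberField K] (α : K), IsSqrtNegGenerator d α →
    ∃ H : Subgroup (ClassGroup (𝓞 K)), Nonempty (H ≃* Multiplicative (ZMod p × ZMod p))

/-- The squarefree positive `d` for which `ℚ(√-d)` has discriminant at most `X` in absolute value
and class group containing a copy of `(ℤ/p)²`. -/
def rankTwoSet (p : ℕ) (X : ℝ) : Set ℕ :=
  {d : ℕ | 0 < d ∧ Squarefree d ∧
    ∀ (K : Type) [Field K] [NumberField K] (α : K),
      α ^ 2 = -(d : K) → Algebra.adjoin ℚ {α} = ⊤ →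
        |(discr K : ℝ)| ≤ X ∧
        ∃ H : Subgroup (ClassGroup (𝓞 K)),
          Nonempty (H ≃* Multiplicative (ZMod p × ZMod p))}

theorem HasClassRankTwo.mem_rankTwoSet {p d : ℕ} {X : ℝ} (h : HasClassRankTwo p d)
    (hX : 4 * (d : ℝ) ≤ X) : d ∈ rankTwoSet p X := by
  have hd : 0 < d := Nat.pos_of_ne_zero h.1.ne_zero
  refine ⟨hd, h.1, fun K _ _ α hα hα' => ⟨le_trans ?_ hX, h.2 K α ⟨hα, hα'⟩⟩⟩
  exact_mod_cast IsSqrtNegGenerator.abs_discr_le ⟨hα, hα'⟩ hd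

theorem finite_rankTwoSet (p : ℕ) (X : ℝ) : (rankTwoSet p X).Finite := by
  refine (Set.finite_Iic ⌈4 * X⌉₊).subset fun d ⟨_, hd, h⟩ => ?_
  obtain ⟨K, _, _, α, hα⟩ := exists_isSqrtNegGenerator d
  have hX : |(discr K : ℝ)| ≤ X := (h K α hα.sq_eq hα.adjoin_eq_top).1
  have hd4 : (d : ℝ) ≤ 4 * |(discr K : ℝ)| := by exact_mod_cast hα.le_four_mul_abs_discr hd
  have : (d : ℝ) ≤ (⌈4 * X⌉₊ : ℝ) := le_trans (by linarith) (Nat.le_ceil _)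
  exact_mod_cast this

theorem card_le_ncard_rankTwoSet {p : ℕ} {X : ℝ} {S : Finset ℕ}
    (hS : ∀ d ∈ S, HasClassRankTwo p d ∧ 4 * (d : ℝ) ≤ X) : S.card ≤ (rankTwoSet p X).ncard := by
  rw [← Set.ncard_coe_finset]
  exact Set.ncard_le_ncard (fun d hd => (hS d hd).1.mem_rankTwoSet (hS d hd).2)
    (finite_rankTwoSet p X)

open UniqueFactorizationMonoid (radical)

/-! ### From pairs with highly divisible `p`-th power difference to class groups -/

theorem exists_eq_mul_radical_mul_sq {f : ℕ} (hf : f ≠ 0) :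
    ∃ D t : ℕ, f = D * (radical f * t ^ 2) ∧ D ^ 2 ∣ f := by
  obtain ⟨a, b, rfl, ha⟩ := Nat.sq_mul_squarefree f
  set r := radical (b ^ 2 * a) with hr
  obtain ⟨D, hD⟩ : a ∣ r :=
    (UniqueFactorizationMonoid.dvd_radical_iff ha.isRadical hf).2 (dvd_mul_left a _)
  have hsq : Squarefree (a * D) := hD ▸ UniqueFactorizationMonoid.squarefree_radical
  have hDb : D ∣ b := by
    have hcop : Nat.Coprime D a := (Nat.coprime_of_squarefree_mul hsq).symm
    have hdvd : D ∣ b ^ 2 * a :=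
      (Dvd.intro_left a hD.symm).trans UniqueFactorizationMonoid.radical_dvd_self
    have hDsq : Squarefree D := hsq.squarefree_of_dvd (dvd_mul_left D a)
    exact (hDsq.dvd_pow_iff_dvd two_ne_zero).1 (hcop.dvd_of_dvd_mul_right hdvd)
  obtain ⟨t, rfl⟩ := hDb
  exact ⟨D, t, by rw [hD]; ring, ⟨t ^ 2 * a, by ring⟩⟩

theorem exists_squarefree_of_mul_mul_sq {c r t : ℕ} (hr : Squarefree r) (hc : 0 < c) :
    ∃ n k b : ℕ, c * (r * t ^ 2) = k * b ^ 2 ∧ Squarefree k ∧ n ∣ k ∧ n ∣ r ∧ r ≤ c * n := by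
  obtain ⟨g, n, m, -, hnm, rfl, rfl⟩ := Nat.exists_coprime' (Nat.gcd_pos_of_pos_right r hc)
  obtain ⟨a, s, rfl, ha⟩ := Nat.sq_mul_squarefree m
  have hn : Squarefree n := hr.squarefree_of_dvd (dvd_mul_right n _)
  have hna : Nat.Coprime n a := hnm.coprime_dvd_right (dvd_mul_left a _)
  refine ⟨n, n * a, g * s * t, by ring, (Nat.squarefree_mul hna).2 ⟨hn, ha⟩, dvd_mul_right n a,
    dvd_mul_right n g, ?_⟩
  rw [mul_comm n]
  exact Nat.mul_le_mul_right n (Nat.le_mul_of_pos_left g (Nat.pos_of_mul_pos_right hc))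

theorem card_primeFactors_lt_of_lt_pow_self {Y m : ℕ} (hm : 0 < m) (hmY : m < Y ^ Y)
    (hY : ∀ s ∈ m.primeFactors, Y < s) : m.primeFactors.card < Y := by
  by_contra! hcard
  have hY0 : Y ≠ 0 := by rintro rfl; omega
  have h : Y ^ m.primeFactors.card ≤ m :=
    (Finset.pow_card_le_prod _ _ _ fun s hs => (hY s hs).le).trans
      (Nat.le_of_dvd hm (Nat.prod_primeFactors_dvd m))
  exact absurd (Nat.pow_le_pow_right (Nat.pos_of_ne_zero hY0) hcard) (by omega)

theorem exists_forall_not_dvd_add_mul {P : Finset ℕ} {Y : ℕ} (hP : ∀ s ∈ P, s.Prime ∧ Y < s)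
    (hcard : P.card < Y) (a b : ℕ → ℤ) (hb : ∀ s ∈ P, ¬ (s : ℤ) ∣ b s) :
    ∃ c ∈ Finset.Icc 1 Y, ∀ s ∈ P, ¬ (s : ℤ) ∣ a s + b s * c := by
  by_contra! h
  choose! S hSP hS using h
  obtain ⟨c, hc, c', hc', hne, heq⟩ := Finset.exists_ne_map_eq_of_card_lt_of_maps_to
    (by rwa [Nat.card_Icc, Nat.add_sub_cancel]) hSP
  have hsub : ((S c : ℕ) : ℤ) ∣ b (S c) * (c - c') := by
    have := dvd_sub (hS c hc) (heq ▸ hS c' hc')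
    rwa [add_sub_add_left_eq_sub, ← mul_sub] at this
  obtain ⟨hprime, hYs⟩ := hP _ (hSP c hc)
  have hcc := ((Nat.prime_iff_prime_int.1 hprime).dvd_or_dvd hsub).resolve_left (hb _ (hSP c hc))
  rw [Finset.mem_Icc] at hc hc'
  have := Int.eq_zero_of_abs_lt_dvd hcc (by rw [abs_lt]; constructor <;> omega)
  exact hne (by omega)

/-- The quotient `(aᵖ - bᵖ) / (a - b)`, as a polynomial in `a` and `b`. -/
def powQuot (p a b : ℕ) : ℕ := ∑ i ∈ Finset.range p, a ^ i * b ^ (p - 1 - i)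

theorem add_pow_eq_pow_add_mul_powQuot (p b e : ℕ) :
    (b + e) ^ p = b ^ p + e * powQuot p (b + e) b := by
  have h := Commute.mul_geom_sum₂ (Commute.all ((b + e : ℕ) : ℤ) b) p
  zify [powQuot]
  push_cast at h
  linear_combination -h

theorem pow_le_powQuot {p : ℕ} (hp : p ≠ 0) (a b : ℕ) : a ^ (p - 1) ≤ powQuot p a b := by
  have hmem : p - 1 ∈ Finset.range p := Finset.mem_range.2 (by omega)
  simpa [powQuot] using Finset.single_le_sum (f := fun i => a ^ i * b ^ (p - 1 - i))
    (fun i _ => Nat.zero_le _) hmem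

theorem powQuot_le {a b : ℕ} (p : ℕ) (h : b ≤ a) : powQuot p a b ≤ p * a ^ (p - 1) := by
  rw [← smul_eq_mul]
  nth_rw 2 [← Finset.card_range p]
  refine Finset.sum_le_card_nsmul _ _ _ fun i hi => ?_
  calc a ^ i * b ^ (p - 1 - i) ≤ a ^ i * a ^ (p - 1 - i) := by gcongr
    _ = a ^ (p - 1) := by rw [← pow_add]; congr 1; have := Finset.mem_range.1 hi; omega

theorem mul_add_sq_lt_pow {p k e φ a b w : ℕ} (hp : p ≠ 0) (hk : k * (4 * (a * b)) = e * φ)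
    (hφ : φ ≤ p * w ^ (p - 1)) (ha : p * e * a < w * b) (hb : p * e * b < w * a) :
    k * (a + b) ^ 2 < w ^ p := by
  wlog hab : a ≤ b generalizing a b
  · rw [add_comm]
    exact this (by rw [mul_comm b, hk]) hb ha (le_of_not_ge hab)
  have hw : 0 < w := Nat.pos_of_ne_zero (by rintro rfl; omega)
  refine lt_of_mul_lt_mul_right (a := a) ?_ (Nat.zero_le a)
  calc k * (a + b) ^ 2 * a ≤ k * (b + b) ^ 2 * a := by gcongr
    _ = k * (4 * (a * b)) * b := by ring
    _ = e * φ * b := by rw [hk]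
    _ ≤ e * (p * w ^ (p - 1)) * b := by gcongr
    _ = w ^ (p - 1) * (p * e * b) := by ring
    _ < w ^ (p - 1) * (w * a) := by gcongr
    _ = w ^ p * a := by rw [← mul_assoc, ← pow_succ, Nat.sub_add_cancel (by omega)]

/-- Coprime integers `w₁ = w₂ + 4 C s`, `w₂ > 1`, for which `q f` is the quotient of
`w₁ᵖ - w₂ᵖ` by `w₁ - w₂`. The fields from which class groups of rank two arise are built
from such pairs, `q` and `f` being the two factors between which the size is balanced. -/
structure PowerPair (p C s q f w₁ w₂ : ℕ) : Prop where
  coprime : Nat.Coprime w₁ w₂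
  one_lt : 1 < w₂
  eq_add : w₁ = w₂ + 4 * C * s
  powQuot_eq : powQuot p w₁ w₂ = q * f

namespace PowerPair

variable {p Y C s q q₁ q₂ f w₁ w₂ : ℕ}

theorem le (h : PowerPair p C s q f w₁ w₂) : w₂ ≤ w₁ := h.eq_add ▸ Nat.le_add_right _ _

theorem pow_eq (h : PowerPair p C s q f w₁ w₂) : w₁ ^ p = w₂ ^ p + 4 * C * s * (q * f) := by
  rw [← h.powQuot_eq, h.eq_add, add_pow_eq_pow_add_mul_powQuot]

theorem mul_pos (h : PowerPair p C s q f w₁ w₂) : 0 < 4 * C * s := by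
  refine Nat.pos_of_ne_zero fun h0 => ?_
  have := h.coprime
  rw [h.eq_add, h0, add_zero, Nat.coprime_self] at this
  exact h.one_lt.ne' this

theorem mul_factor_pos (h : PowerPair p C s q f w₁ w₂) (hp : p ≠ 0) : 0 < q * f := by
  rw [← h.powQuot_eq]
  exact (pow_pos (lt_of_lt_of_le (by have := h.one_lt; omega) h.le) _).trans_le
    (pow_le_powQuot hp w₁ w₂)

theorem coprime_mul (h : PowerPair p C s q f w₁ w₂) (hp : p ≠ 0) :
    Nat.Coprime (w₁ * w₂) (4 * C * s * (q * f)) := by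
  have hp0 := Nat.pos_of_ne_zero hp
  have hcop : Nat.Coprime (w₁ ^ p) (w₂ ^ p) := h.coprime.pow p p
  rw [h.pow_eq, Nat.coprime_self_add_left] at hcop
  refine Nat.Coprime.mul_left ?_ ((Nat.coprime_pow_left_iff hp0 _ _).1 hcop.symm)
  rw [← Nat.coprime_pow_left_iff hp0, h.pow_eq, Nat.coprime_add_self_left]
  exact hcop.symm

theorem lt_of_mem_primeFactors (h : PowerPair p C s q f w₁ w₂) (hp : p ≠ 0)
    (hC : ∀ c ∈ Finset.Icc 1 Y, c ∣ C) {r : ℕ} (hr : r ∈ (w₁ * w₂).primeFactors) : Y < r := by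
  by_contra! hle
  have hprime := Nat.prime_of_mem_primeFactors hr
  have hrC : r ∣ C := hC r (Finset.mem_Icc.2 ⟨hprime.one_le, hle⟩)
  refine hprime.one_lt.ne' (Nat.eq_one_of_dvd_coprimes (h.coprime_mul hp)
    (Nat.dvd_of_mem_primeFactors hr) (hrC.trans ⟨4 * s * (q * f), by ring⟩))

theorem exists_isCoprime_add_sub (h : PowerPair p C s q f w₁ w₂) (hp : p ≠ 0)
    (hC : ∀ c ∈ Finset.Icc 1 Y, c ∣ C) (hY : w₁ * w₂ < Y ^ Y) (A : ℤ) {β : ℕ} (hβ : β ∣ q * f) :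
    ∃ c ∈ Finset.Icc 1 Y, IsCoprime (w₁ : ℤ) (A + β * c) ∧ IsCoprime (w₂ : ℤ) (A - β * c) := by
  have hw₂ := h.one_lt
  have hw : 0 < w₁ * w₂ := Nat.mul_pos (by have := h.le; omega) (by omega)
  have hlt : ∀ r ∈ (w₁ * w₂).primeFactors, Y < r := fun r => h.lt_of_mem_primeFactors hp hC
  have hβr : ∀ r ∈ (w₁ * w₂).primeFactors, ¬ (r : ℤ) ∣ β := fun r hr hdvd =>
    (Nat.prime_of_mem_primeFactors hr).one_lt.ne' (Nat.eq_one_of_dvd_coprimes (h.coprime_mul hp)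
      (Nat.dvd_of_mem_primeFactors hr)
      (((Int.natCast_dvd_natCast.1 hdvd).trans hβ).trans (dvd_mul_left _ _)))
  obtain ⟨c, hcY, hc⟩ := exists_forall_not_dvd_add_mul
    (fun r hr => ⟨Nat.prime_of_mem_primeFactors hr, hlt r hr⟩)
    (card_primeFactors_lt_of_lt_pow_self hw hY hlt) (fun _ => A)
    (fun r => if r ∣ w₁ then β else -β)
    (fun r hr => by split_ifs <;> simpa only [dvd_neg] using hβr r hr)
  have hprime : ∀ {w : ℕ} {z : ℤ}, (∀ r : ℕ, r.Prime → r ∣ w → ¬ (r : ℤ) ∣ z) →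
      IsCoprime (w : ℤ) z := fun hr => Int.isCoprime_iff_nat_coprime.2
    (Nat.coprime_of_dvd fun r hr' h1 h2 => hr r hr' (by simpa using h1) (Int.natCast_dvd.2 h2))
  refine ⟨c, hcY, hprime fun r hr hrw => ?_, hprime fun r hr hrw => ?_⟩
  · simpa only [if_pos hrw] using hc r (Nat.mem_primeFactors.2 ⟨hr, hrw.mul_right _, hw.ne'⟩)
  · have hrw₁ : ¬ r ∣ w₁ := fun h' => hr.one_lt.ne' (Nat.eq_one_of_dvd_coprimes h.coprime h' hrw)
    simpa only [if_neg hrw₁, neg_mul, ← sub_eq_add_neg] using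
      hc r (Nat.mem_primeFactors.2 ⟨hr, hrw.mul_left _, hw.ne'⟩)

theorem exists_powerRep (h : PowerPair p C s (q₁ * q₂) f w₁ w₂) (hp : p ≠ 0)
    (hC : ∀ c ∈ Finset.Icc 1 Y, c ∣ C) (hY : w₁ * w₂ < Y ^ Y) {D F : ℕ} (hf : f = D * F)
    (h₁ : p * (4 * C * s) * (C * s * q₁) < w₁ * (q₂ * D))
    (h₂ : p * (4 * C * s) * (q₂ * D) * Y < w₁ * (C * s * q₁)) :
    ∃ c ∈ Finset.Icc 1 Y, ∃ (l : ℕ) (u₁ u₂ : ℤ), 0 < l ∧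
      PowerRep (c * F) l p u₁ 1 w₁ ∧ PowerRep (c * F) l p u₂ 1 w₂ := by
  set β := q₂ * D with hβ
  obtain ⟨c, hcY, hcop₁, hcop₂⟩ := h.exists_isCoprime_add_sub hp hC hY (C * s * q₁ : ℕ)
    (β := β) ⟨q₁ * F, by rw [hβ, hf]; ring⟩
  obtain ⟨C', rfl⟩ := hC c hcY
  obtain ⟨hc1, hcY'⟩ := Finset.mem_Icc.1 hcY
  set a := C' * s * q₁ with ha
  set e := 4 * (c * C') * s with he
  have hca : c * C' * s * q₁ = c * a := by rw [ha]; ring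
  rw [hca] at hcop₁ hcop₂ h₁ h₂
  have hkey : c * F * (4 * (a * β)) = e * (q₁ * q₂ * f) := by rw [ha, he, hβ, hf]; ring
  have hlt : c * F * (a + β) ^ 2 < w₁ ^ p := by
    refine mul_add_sq_lt_pow hp hkey ((h.powQuot_eq.symm.le).trans (powQuot_le p h.le)) ?_ ?_
    · exact (Nat.mul_le_mul_left _ (Nat.le_mul_of_pos_left a hc1)).trans_lt h₁
    · refine lt_of_mul_lt_mul_right (h₂.trans_le ?_) (Nat.zero_le Y)
      calc w₁ * (c * a) = w₁ * a * c := by ring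
        _ ≤ w₁ * a * Y := Nat.mul_le_mul_left _ hcY'
  have hpow : (w₁ : ℤ) ^ p = w₂ ^ p + e * (q₁ * q₂ * f) := by exact_mod_cast h.pow_eq
  have hkeyZ : (c * F * (4 * (a * β)) : ℤ) = e * (q₁ * q₂ * f) := by exact_mod_cast hkey
  obtain ⟨l, hl⟩ := Nat.exists_eq_add_of_lt hlt
  have hlZ : (w₁ : ℤ) ^ p = c * F * (a + β) ^ 2 + l + 1 := by exact_mod_cast hl
  have hw : Nat.Coprime (w₁ * w₂) (2 * (c * F)) := (h.coprime_mul hp).coprime_dvd_right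
    ⟨2 * C' * s * (q₁ * q₂ * D), by rw [hf]; ring⟩
  have hrep : ∀ {w : ℕ} {z : ℤ}, w ∣ w₁ * w₂ → IsCoprime (w : ℤ) ((c * a : ℕ) + z * c) →
      IsCoprime (w : ℤ) (2 * (c * F : ℕ) * (a + z)) := fun {w z} hdvd hz => by
    refine IsCoprime.mul_right (by exact_mod_cast hw.coprime_dvd_left hdvd) ?_
    rw [show ((c * a : ℕ) + z * c : ℤ) = c * (a + z) by push_cast; ring] at hz
    exact hz.of_mul_right_right
  refine ⟨c, hcY, l + 1, a + β, a + -β, l.succ_pos,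
    ⟨by push_cast; rw [hlZ]; ring, hrep (dvd_mul_right _ _) hcop₁, h.one_lt.trans_le h.le⟩,
    ⟨by push_cast; linear_combination -hlZ + hpow - hkeyZ,
      hrep (dvd_mul_left _ _) (by rwa [neg_mul, ← sub_eq_add_neg]), h.one_lt⟩⟩

end PowerPair

namespace PowerRep

variable {k l p w : ℕ} {x y : ℤ}

theorem coprime (P : PowerRep k l p x y w) : Nat.Coprime k l := by
  refine Nat.coprime_of_dvd fun r hr hk hl => ?_
  have hr' : Prime (r : ℤ) := Nat.prime_iff_prime_int.1 hr
  have hrw : (r : ℤ) ∣ w := hr'.dvd_of_dvd_pow (n := p) <| P.form_eq ▸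
    dvd_add ((Int.natCast_dvd_natCast.2 hk).mul_right _)
      ((Int.natCast_dvd_natCast.2 hl).mul_right _)
  exact hr'.not_isUnit (P.isCoprime.isUnit_of_dvd' hrw
    (((Int.natCast_dvd_natCast.2 hk).mul_left 2).mul_right x))

theorem le_pow (P : PowerRep k l p x 1 w) : l ≤ w ^ p := by
  zify
  nlinarith [P.form_eq, mul_nonneg (Int.natCast_nonneg k) (sq_nonneg x)]

theorem of_mul_sq {b c : ℕ} (P : PowerRep (k * b ^ 2) (l * c ^ 2) p x y w) :
    PowerRep k l p (b * x) (c * y) w where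
  form_eq := by rw [← P.form_eq]; push_cast; ring
  isCoprime := by
    have := P.isCoprime
    rw [show (2 * (k * b ^ 2 : ℕ) * x : ℤ) = b * (2 * k * (b * x)) by push_cast; ring] at this
    exact this.of_mul_right_right
  one_lt := P.one_lt

end PowerRep

theorem PowerPair.exists_hasClassRankTwo {p Y C s q₁ q₂ f w₁ w₂ D t : ℕ}
    (h : PowerPair p C s (q₁ * q₂) f w₁ w₂) (hp : p.Prime) (hp2 : p ≠ 2)
    (hC : ∀ c ∈ Finset.Icc 1 Y, c ∣ C) (hY : w₁ * w₂ < Y ^ Y) (hf : f = D * (radical f * t ^ 2))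
    (h₁ : p * (4 * C * s) * (C * s * q₁) < w₁ * (q₂ * D))
    (h₂ : p * (4 * C * s) * (q₂ * D) * Y < w₁ * (C * s * q₁))
    (hrad : Y * (4 * w₁ ^ max 3 (p - 4)) < radical f) :
    ∃ d n : ℕ, HasClassRankTwo p d ∧ n ∣ d ∧ n ∣ f ∧ radical f ≤ Y * n ∧ d ≤ Y * f * w₁ ^ p := by
  obtain ⟨c, hcY, l, u₁, u₂, hl, P₁, P₂⟩ := h.exists_powerRep hp.ne_zero hC hY hf h₁ h₂
  obtain ⟨hc1, hcY'⟩ := Finset.mem_Icc.1 hcY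
  obtain ⟨n, k', b, hk, hk', hnk, hnr, hrn⟩ := exists_squarefree_of_mul_mul_sq (t := t)
    (UniqueFactorizationMonoid.squarefree_radical (a := f)) hc1
  obtain ⟨l', b', rfl, hl'⟩ := Nat.sq_mul_squarefree l
  have hf0 : 0 < f := Nat.pos_of_ne_zero
    (right_ne_zero_of_mul (h.mul_factor_pos hp.ne_zero).ne')
  have hF : 0 < radical f * t ^ 2 := pos_of_mul_pos_right (hf ▸ hf0) (Nat.zero_le D)
  have hkf : k' ≤ Y * f := calc
    k' ≤ c * (radical f * t ^ 2) :=
      Nat.le_of_dvd (Nat.mul_pos hc1 hF) (hk ▸ dvd_mul_right k' _)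
    _ ≤ Y * f := Nat.mul_le_mul hcY' (Nat.le_of_dvd hf0 ⟨D, by rw [mul_comm, ← hf]⟩)
  have hlw : b' ^ 2 * l' ≤ w₁ ^ p := P₁.le_pow
  rw [hk, mul_comm (b' ^ 2)] at P₁ P₂
  have hcop : Nat.Coprime k' l' := P₁.of_mul_sq.coprime
  have hsq : Squarefree (k' * l') := (Nat.squarefree_mul hcop).2 ⟨hk', hl'⟩
  have hrn' : radical f ≤ Y * n := hrn.trans (Nat.mul_le_mul_right n hcY')
  have hkw : 4 * w₁ ^ max 3 (p - 4) < k' :=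
    (lt_of_mul_lt_mul_left (hrad.trans_le hrn') (Nat.zero_le Y)).trans_le
      (Nat.le_of_dvd (Nat.pos_of_ne_zero hk'.ne_zero) hnk)
  refine ⟨k' * l', n, ⟨hsq, fun K _ _ α hα => ?_⟩, hnk.mul_right l',
    hnr.trans UniqueFactorizationMonoid.radical_dvd_self, hrn', ?_⟩
  · exact hα.exists_subgroup_classGroup_mulEquiv hsq hp hp2 P₁.of_mul_sq P₂.of_mul_sq h.coprime
      le_rfl h.le hkw
  · exact Nat.mul_le_mul hkf ((Nat.le_of_dvd hl (dvd_mul_left l' _)).trans hlw)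

/-! ### Divisors, roots of unity modulo `n` and pairs with a given ratio -/

theorem succ_pow_le_factorial_mul_two_pow (v k : ℕ) :
    (v + 1) ^ k ≤ k.factorial * 2 ^ k * 2 ^ v := by
  calc (v + 1) ^ k ≤ (v + 1).ascFactorial k := Nat.pow_succ_le_ascFactorial _ _
    _ = k.factorial * (v + k).choose k := Nat.ascFactorial_eq_factorial_mul_choose _ _
    _ ≤ k.factorial * 2 ^ (v + k) := Nat.mul_le_mul_left _ (Nat.choose_le_two_pow _ _)
    _ = k.factorial * 2 ^ k * 2 ^ v := by ring

theorem exists_card_divisors_pow_le (k : ℕ) :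
    ∃ C : ℕ, ∀ n : ℕ, n ≠ 0 → n.divisors.card ^ k ≤ C * n := by
  set A := k.factorial * 2 ^ k
  have hA1 : 1 ≤ A := Nat.mul_pos k.factorial_pos (by positivity)
  refine ⟨A ^ 2 ^ k, fun n hn => ?_⟩
  have hfactor : ∀ s ∈ n.primeFactors, (n.factorization s + 1) ^ k ≤
      (if s < 2 ^ k then A else 1) * s ^ n.factorization s := fun s hs => by
    split_ifs with hsk
    · refine (succ_pow_le_factorial_mul_two_pow _ k).trans (Nat.mul_le_mul_left _ ?_)
      exact Nat.pow_le_pow_left (Nat.prime_of_mem_primeFactors hs).two_le _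
    · rw [one_mul]
      calc (n.factorization s + 1) ^ k ≤ (2 ^ n.factorization s) ^ k :=
            Nat.pow_le_pow_left Nat.lt_two_pow_self k
        _ = (2 ^ k) ^ n.factorization s := pow_right_comm _ _ _
        _ ≤ s ^ n.factorization s := Nat.pow_le_pow_left (not_lt.1 hsk) _
  calc n.divisors.card ^ k = ∏ s ∈ n.primeFactors, (n.factorization s + 1) ^ k := by
        rw [Nat.card_divisors hn, Finset.prod_pow]
    _ ≤ ∏ s ∈ n.primeFactors, (if s < 2 ^ k then A else 1) * s ^ n.factorization s :=
        Finset.prod_le_prod' hfactor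
    _ = A ^ {s ∈ n.primeFactors | s < 2 ^ k}.card * n := by
        rw [Finset.prod_mul_distrib, Finset.prod_ite, Finset.prod_const, Finset.prod_const_one,
          mul_one]
        congr 1
        exact Nat.prod_factorization_pow_eq_self hn
    _ ≤ A ^ 2 ^ k * n := by
        refine Nat.mul_le_mul_right n (Nat.pow_le_pow_right hA1 ?_)
        exact (Finset.card_le_card fun s hs =>
          Finset.mem_range.2 (Finset.mem_filter.1 hs).2).trans_eq (Finset.card_range _)

theorem eventually_card_divisors_pow_le (j M : ℕ) :
    ∀ᶠ u : ℕ in Filter.atTop, ∀ n : ℕ, n ≠ 0 → n ≤ u ^ M → n.divisors.card ^ j ≤ u := by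
  obtain ⟨C, hC⟩ := exists_card_divisors_pow_le (j * (M + 1))
  filter_upwards [Filter.eventually_ge_atTop C] with u hu n hn hnM
  refine (Nat.pow_le_pow_iff_left (Nat.succ_ne_zero M)).1 ?_
  calc (n.divisors.card ^ j) ^ (M + 1) = n.divisors.card ^ (j * (M + 1)) := (pow_mul _ _ _).symm
    _ ≤ C * n := hC n hn
    _ ≤ u * u ^ M := Nat.mul_le_mul hu hnM
    _ = u ^ (M + 1) := (pow_succ' u M).symm

theorem card_rootsOfUnity_le_of_isCyclic {R : Type*} [CommRing R] [Finite Rˣ] [IsCyclic Rˣ] {p : ℕ}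
    (hp : 0 < p) : Nat.card (rootsOfUnity p R) ≤ p := by
  classical
  have := Fintype.ofFinite Rˣ
  refine le_of_eq_of_le ?_ (IsCyclic.card_pow_eq_one_le (α := Rˣ) hp)
  rw [← Fintype.card_subtype, ← Nat.card_eq_fintype_card]
  exact Nat.card_congr (Equiv.subtypeEquivRight fun ζ => mem_rootsOfUnity p ζ)

theorem card_rootsOfUnity_prod_le {R S : Type*} [CommRing R] [CommRing S] [Finite Rˣ] [Finite Sˣ]
    (p : ℕ) : Nat.card (rootsOfUnity p (R × S)) ≤
      Nat.card (rootsOfUnity p R) * Nat.card (rootsOfUnity p S) := by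
  rw [← Nat.card_prod]
  refine Nat.card_le_card_of_injective (fun ζ => (restrictRootsOfUnity (RingHom.fst R S) p ζ,
    restrictRootsOfUnity (RingHom.snd R S) p ζ)) fun ζ ξ h => ?_
  rw [Prod.mk.injEq] at h
  refine Subtype.ext (Units.ext (Prod.ext ?_ ?_))
  · simpa using congrArg (fun η : rootsOfUnity p R => ((η : Rˣ) : R)) h.1
  · simpa using congrArg (fun η : rootsOfUnity p S => ((η : Sˣ) : S)) h.2

theorem card_rootsOfUnity_zmod_le {p n : ℕ} (hp : 0 < p) (hn : Odd n) :
    Nat.card (rootsOfUnity p (ZMod n)) ≤ p ^ n.primeFactors.card := by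
  induction n using Nat.recOnPosPrimePosCoprime with
  | zero => exact absurd hn (by decide)
  | one =>
    simp only [Nat.primeFactors_one, Finset.card_empty, pow_zero]
    exact Finite.card_le_one_iff_subsingleton.2 inferInstance
  | prime_pow s k hs hk =>
    have hs2 : s ≠ 2 := by
      rintro rfl
      exact (Nat.not_odd_iff_even.2 (even_two.pow_of_ne_zero hk.ne')) hn
    have : NeZero (s ^ k) := ⟨hn.pos.ne'⟩
    have : IsCyclic (ZMod (s ^ k))ˣ := ZMod.isCyclic_units_of_prime_pow s hs hs2 k
    rw [Nat.primeFactors_prime_pow hk.ne' hs, Finset.card_singleton, pow_one]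
    exact card_rootsOfUnity_le_of_isCyclic hp
  | coprime a b ha hb hab iha ihb =>
    have : NeZero a := ⟨by omega⟩
    have : NeZero b := ⟨by omega⟩
    rw [hab.primeFactors_mul, Finset.card_union_of_disjoint hab.disjoint_primeFactors, pow_add,
      Nat.card_congr ((ZMod.chineseRemainder hab).restrictRootsOfUnity p).toEquiv]
    exact (card_rootsOfUnity_prod_le p).trans
      (Nat.mul_le_mul (iha (Nat.odd_mul.1 hn).1) (ihb (Nat.odd_mul.1 hn).2))

theorem two_pow_card_primeFactors_le {n : ℕ} (hn : n ≠ 0) :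
    2 ^ n.primeFactors.card ≤ n.divisors.card := by
  rw [Nat.card_divisors hn]
  refine Finset.pow_card_le_prod _ _ _ fun s hs => ?_
  have := (Nat.prime_of_mem_primeFactors hs).factorization_pos_of_dvd hn
    (Nat.dvd_of_mem_primeFactors hs)
  omega

theorem eventually_card_rootsOfUnity_zmod_le {p : ℕ} (hp : 0 < p) (M : ℕ) :
    ∀ᶠ u : ℕ in Filter.atTop, ∀ n : ℕ, Odd n → n ≤ u ^ M →
      Nat.card (rootsOfUnity p (ZMod n)) ≤ u := by
  filter_upwards [eventually_card_divisors_pow_le p M] with u hu n hn hnM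
  calc Nat.card (rootsOfUnity p (ZMod n)) ≤ p ^ n.primeFactors.card :=
        card_rootsOfUnity_zmod_le hp hn
    _ ≤ (2 ^ p) ^ n.primeFactors.card := Nat.pow_le_pow_left Nat.lt_two_pow_self.le _
    _ = (2 ^ n.primeFactors.card) ^ p := pow_right_comm _ _ _
    _ ≤ n.divisors.card ^ p := Nat.pow_le_pow_left (two_pow_card_primeFactors_le hn.pos.ne') p
    _ ≤ u := hu n hn.pos.ne' hnM

theorem exists_rootsOfUnity_mul_eq {R : Type*} [CommRing R] {a b : R} {p : ℕ} (hp : p ≠ 0)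
    (hab : IsCoprime a b) (h : a ^ p = b ^ p) : ∃ ζ : rootsOfUnity p R, b = (ζ : Rˣ) * a := by
  have hcop : IsCoprime (a ^ p) (b ^ p) := hab.pow
  obtain ⟨x, rfl⟩ : IsUnit a := (isUnit_pow_iff hp).1 (isCoprime_self.1 (h ▸ hcop))
  obtain ⟨y, rfl⟩ : IsUnit b := (isUnit_pow_iff hp).1 (isCoprime_self.1 (h ▸ hcop))
  have hxy : x ^ p = y ^ p := Units.ext (by simpa using h)
  exact ⟨⟨y / x, by rw [mem_rootsOfUnity, div_pow, hxy, div_self']⟩,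
    by rw [← Units.val_mul, div_mul_cancel]⟩

/-- Coprime pairs `(a, b)` with `U ≤ a ≤ W` and `a - E ≤ b ≤ a`; their ratios `b / a` lie in an
interval of length `E / U` and any two distinct ratios differ by at least `1 / W²`. -/
structure NarrowPair (U W E : ℕ) (w : ℕ × ℕ) : Prop where
  coprime : Nat.Coprime w.1 w.2
  le : w.2 ≤ w.1
  lower : U ≤ w.1
  upper : w.1 ≤ W
  le_add : w.1 ≤ w.2 + E

namespace NarrowPair

variable {U W E n : ℕ} {v w : ℕ × ℕ}

theorem eq_of_mul_eq_mul (hw : NarrowPair U W E w) (hv : NarrowPair U W E v) (hU : 0 < U)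
    (h : w.1 * v.2 = w.2 * v.1) : w = v := by
  have h1 : w.1 = v.1 := Nat.dvd_antisymm (hw.coprime.dvd_of_dvd_mul_left ⟨v.2, h.symm⟩)
    (hv.coprime.dvd_of_dvd_mul_right ⟨w.2, by rw [h, mul_comm]⟩)
  refine Prod.ext h1 (Nat.eq_of_mul_eq_mul_left (hU.trans_le hv.lower) ?_)
  rw [← h1, h, h1, mul_comm]

theorem div_lt_div (hw : NarrowPair U W E w) (hv : NarrowPair U W E v) (hU : 0 < U) (hn : 0 < n)
    (h : (v.1 - v.2) * w.1 + n ≤ (w.1 - w.2) * v.1) :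
    (v.1 - v.2) * W ^ 2 / (v.1 * n) < (w.1 - w.2) * W ^ 2 / (w.1 * n) := by
  have hw0 : 0 < w.1 := hU.trans_le hw.lower
  have hv0 : 0 < v.1 := hU.trans_le hv.lower
  set t := (v.1 - v.2) * W ^ 2 / (v.1 * n)
  have htv : t * (v.1 * n) ≤ (v.1 - v.2) * W ^ 2 := Nat.div_mul_le_self _ _
  refine (Nat.le_div_iff_mul_le (Nat.mul_pos hw0 hn)).2 (le_of_mul_le_mul_right ?_ hv0)
  calc (t + 1) * (w.1 * n) * v.1 = t * (v.1 * n) * w.1 + w.1 * v.1 * n := by ring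
    _ ≤ (v.1 - v.2) * W ^ 2 * w.1 + W * W * n := by
        gcongr
        exacts [hw.upper, hv.upper]
    _ = ((v.1 - v.2) * w.1 + n) * W ^ 2 := by ring
    _ ≤ (w.1 - w.2) * v.1 * W ^ 2 := by gcongr
    _ = (w.1 - w.2) * W ^ 2 * v.1 := by ring

theorem card_le_of_dvd_det {S : Finset (ℕ × ℕ)} (hS : ∀ w ∈ S, NarrowPair U W E w) (hU : 0 < U)
    (hn : 0 < n) (hdet : ∀ w ∈ S, ∀ v ∈ S, (n : ℤ) ∣ (w.1 : ℤ) * v.2 - w.2 * v.1) :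
    S.card ≤ E * W ^ 2 / (U * n) + 1 := by
  rw [← Finset.card_range (E * W ^ 2 / (U * n) + 1)]
  refine Finset.card_le_card_of_injOn (fun w => (w.1 - w.2) * W ^ 2 / (w.1 * n))
    (fun w hw => ?_) fun w hw v hv hwv => ?_
  · have hw := hS w hw
    refine Finset.mem_coe.2 (Finset.mem_range_succ_iff.2 (Nat.div_le_div ?_ ?_ ?_))
    · exact Nat.mul_le_mul_right _ (by have := hw.le_add; omega)
    · exact Nat.mul_le_mul_right n hw.lower
    · exact (Nat.mul_pos hU hn).ne'
  · have hw' := hS w hw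
    have hv' := hS v hv
    refine hw'.eq_of_mul_eq_mul hv' hU (by_contra fun hne => ?_)
    have hdet0 : (w.1 : ℤ) * v.2 - w.2 * v.1 ≠ 0 := sub_ne_zero.2 (by exact_mod_cast hne)
    have habs := Int.le_of_dvd (abs_pos.2 hdet0) ((dvd_abs _ _).2 (hdet w hw v hv))
    have hwle := hw'.le
    have hvle := hv'.le
    rcases le_abs.1 habs with h | h
    · refine (hw'.div_lt_div hv' hU hn ?_).ne' hwv
      zify [hwle, hvle]
      linarith
    · refine (hv'.div_lt_div hw' hU hn ?_).ne hwv
      zify [hwle, hvle]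
      linarith

theorem card_le_of_pow_eq_pow {S : Finset (ℕ × ℕ)} {p : ℕ} (hS : ∀ w ∈ S, NarrowPair U W E w)
    (hU : 0 < U) (hn : 0 < n) (hp : p ≠ 0)
    (hpow : ∀ w ∈ S, (w.1 : ZMod n) ^ p = (w.2 : ZMod n) ^ p) :
    S.card ≤ (E * W ^ 2 / (U * n) + 1) * Nat.card (rootsOfUnity p (ZMod n)) := by
  classical
  have : NeZero n := ⟨hn.ne'⟩
  have hroot : ∀ w ∈ S, ∃ ζ : rootsOfUnity p (ZMod n), (w.2 : ZMod n) = (ζ : (ZMod n)ˣ) * w.1 :=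
    fun w hw => exists_rootsOfUnity_mul_eq hp
      (by simpa using ((hS w hw).coprime.isCoprime.map (Int.castRingHom (ZMod n)))) (hpow w hw)
  choose! ζ hζ using hroot
  have := Fintype.ofFinite (rootsOfUnity p (ZMod n))
  rw [Nat.card_eq_fintype_card]
  refine Finset.card_le_mul_card_image_of_maps_to (fun w _ => Finset.mem_univ (ζ w)) _
    fun ξ _ => card_le_of_dvd_det (fun w hw => hS w (Finset.mem_filter.1 hw).1) hU hn
      fun w hw v hv => ?_
  rw [Finset.mem_filter] at hw hv
  rw [← ZMod.intCast_zmod_eq_zero_iff_dvd]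
  push_cast
  rw [hζ w hw.1, hζ v hv.1, hw.2, hv.2]
  ring

end NarrowPair

section Karamata

open Filter Topology Polynomial

theorem summable_mul_eval_rpow {a : ℕ → ℝ}
    (ha : ∀ t : ℝ, 0 < t → Summable fun n => a n * (n : ℝ) ^ (-t))
    (P : ℝ[X]) {t : ℝ} (ht : 0 < t) :
    Summable fun n => a n * ((n : ℝ) ^ (-t) * P.eval ((n : ℝ) ^ (-t))) := by
  induction P using Polynomial.induction_on' with
  | add P Q hP hQ => simpa only [eval_add, mul_add] using hP.add hQ
  | monomial k c =>
    refine ((ha ((k + 1) * t) (by positivity)).mul_left c).congr fun n => ?_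
    rw [eval_monomial, show -((k + 1) * t) = -t * (k + 1 : ℕ) by push_cast; ring,
      Real.rpow_mul_natCast n.cast_nonneg]
    ring

theorem tendsto_mul_tsum_eval_rpow {a : ℕ → ℝ} {A : ℝ}
    (ha : ∀ t : ℝ, 0 < t → Summable fun n => a n * (n : ℝ) ^ (-t))
    (hA : Tendsto (fun t : ℝ => t * ∑' n, a n * (n : ℝ) ^ (-t)) (𝓝[>] 0) (𝓝 A)) (P : ℝ[X]) :
    Tendsto (fun t : ℝ => t * ∑' n, a n * ((n : ℝ) ^ (-t) * P.eval ((n : ℝ) ^ (-t)))) (𝓝[>] 0)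
      (𝓝 (A * ∫ y in (0 : ℝ)..1, P.eval y)) := by
  induction P using Polynomial.induction_on' with
  | add P Q hP hQ =>
    simp only [eval_add]
    rw [intervalIntegral.integral_add (P.continuous.intervalIntegrable _ _)
      (Q.continuous.intervalIntegrable _ _), mul_add]
    refine (hP.add hQ).congr' (eventually_mem_nhdsWithin.mono fun t ht => ?_)
    rw [← mul_add, ← (summable_mul_eval_rpow ha P ht).tsum_add (summable_mul_eval_rpow ha Q ht)]
    simp only [mul_add]
  | monomial k c =>
    have hscale : Tendsto (fun t : ℝ => (k + 1) * t) (𝓝[>] 0) (𝓝[>] 0) := by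
      refine tendsto_nhdsWithin_iff.2 ⟨?_, eventually_mem_nhdsWithin.mono fun t (ht : 0 < t) => ?_⟩
      · simpa using (tendsto_id (x := 𝓝 (0 : ℝ))).const_mul ((k : ℝ) + 1) |>.mono_left
          nhdsWithin_le_nhds
      · exact Set.mem_Ioi.2 (by positivity)
    have hint : A * ∫ y in (0 : ℝ)..1, (monomial k c).eval y = c / (k + 1) * A := by
      simp only [eval_monomial, intervalIntegral.integral_const_mul, integral_pow, one_pow]
      rw [zero_pow k.succ_ne_zero]
      ring
    rw [hint]
    refine ((hA.comp hscale).const_mul (c / (k + 1))).congr fun t => ?_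
    have hterm : ∀ n : ℕ, a n * ((n : ℝ) ^ (-t) * (monomial k c).eval ((n : ℝ) ^ (-t))) =
        c * (a n * (n : ℝ) ^ (-((k + 1) * t))) := fun n => by
      rw [eval_monomial, show -((k + 1) * t) = -t * (k + 1 : ℕ) by push_cast; ring,
        Real.rpow_mul_natCast n.cast_nonneg]
      ring
    simp only [hterm, tsum_mul_left, Function.comp_apply]
    field_simp

theorem exists_polynomial_integral_pos_of_nonpos_off {α β : ℝ} (hα : 0 ≤ α) (hαβ : α < β)
    (hβ : β ≤ 1) :
    ∃ P : ℝ[X], (∀ y ∈ Set.Icc (0 : ℝ) 1, y ∉ Set.Icc α β → P.eval y ≤ 0) ∧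
      0 < ∫ y in (0 : ℝ)..1, P.eval y := by
  set g : ℝ → ℝ := fun y => max 0 ((y - α) * (β - y))
  have hgc : Continuous g := by fun_prop
  set I := ∫ y in (0 : ℝ)..1, g y with hI
  have hI0 : 0 < I := by
    refine intervalIntegral.integral_pos one_pos hgc.continuousOn (fun y _ => le_max_left _ _)
      ⟨(α + β) / 2, ⟨by linarith, by linarith⟩, lt_max_of_lt_right ?_⟩
    nlinarith
  obtain ⟨Q, hQ⟩ := exists_polynomial_near_of_continuousOn 0 1 g hgc.continuousOn (I / 3)
    (by linarith)
  refine ⟨Q - C (I / 3), fun y hy hyαβ => ?_, ?_⟩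
  · have hgy : g y = 0 := max_eq_left (by
      rw [Set.mem_Icc, not_and_or, not_le, not_le] at hyαβ
      rcases hyαβ with h | h <;> nlinarith)
    have := (abs_lt.1 (hQ y hy)).2
    rw [eval_sub, eval_C]
    linarith
  · have hle : ∫ y in (0 : ℝ)..1, (g y - 2 * I / 3) ≤
        ∫ y in (0 : ℝ)..1, (Q - C (I / 3)).eval y := by
      refine intervalIntegral.integral_mono_on zero_le_one
        ((hgc.sub continuous_const).intervalIntegrable _ _)
        ((Q - C (I / 3)).continuous.intervalIntegrable _ _) fun y hy => ?_
      have := (abs_lt.1 (hQ y hy)).1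
      rw [eval_sub, eval_C]
      linarith
    rw [intervalIntegral.integral_sub (hgc.intervalIntegrable _ _)
      (continuous_const.intervalIntegrable _ _), intervalIntegral.integral_const, ← hI] at hle
    simp only [sub_zero, one_smul] at hle
    linarith

theorem natCast_rpow_neg_mem_Icc (n : ℕ) {t : ℝ} (ht : 0 < t) :
    (n : ℝ) ^ (-t) ∈ Set.Icc (0 : ℝ) 1 := by
  refine ⟨Real.rpow_nonneg n.cast_nonneg _, ?_⟩
  rcases n.eq_zero_or_pos with rfl | hn
  · rw [Nat.cast_zero, Real.zero_rpow (neg_ne_zero.2 ht.ne')]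
    exact zero_le_one
  · exact Real.rpow_le_one_of_one_le_of_nonpos (Nat.one_le_cast.2 hn) (neg_nonpos.2 ht.le)

theorem mem_Icc_of_rpow_neg_inv_log_mem {α β x : ℝ} (hx : 1 < x) {n : ℕ}
    (h : (n : ℝ) ^ (-(Real.log x)⁻¹) ∈ Set.Icc (Real.exp (-β)) (Real.exp (-α))) :
    n ∈ Finset.Icc ⌈x ^ α⌉₊ ⌊x ^ β⌋₊ := by
  have hlog : 0 < Real.log x := Real.log_pos hx
  have hn : (0 : ℝ) < n := by
    refine n.cast_nonneg.lt_of_ne fun h0 => (Real.exp_pos (-β)).not_ge (h.1.trans_eq ?_)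
    rw [← h0, Real.zero_rpow (neg_ne_zero.2 (inv_pos.2 hlog).ne')]
  rw [Set.mem_Icc, Real.rpow_def_of_pos hn, Real.exp_le_exp, Real.exp_le_exp, mul_neg,
    neg_le_neg_iff, neg_le_neg_iff, ← div_eq_mul_inv, div_le_iff₀ hlog, le_div_iff₀ hlog] at h
  rw [Finset.mem_Icc, Nat.ceil_le, Nat.le_floor_iff (Real.rpow_nonneg (by linarith) _),
    Real.rpow_def_of_pos (one_pos.trans hx), Real.rpow_def_of_pos (one_pos.trans hx),
    ← Real.le_log_iff_exp_le hn, ← Real.log_le_iff_le_exp hn, mul_comm _ α, mul_comm _ β]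
  exact h.symm

theorem tsum_mul_eval_rpow_le {a : ℕ → ℝ} {α β B x : ℝ} {P : ℝ[X]} (ha0 : ∀ n, 0 ≤ a n)
    (ha : ∀ t : ℝ, 0 < t → Summable fun n => a n * (n : ℝ) ^ (-t)) (hx : 1 < x) (hB0 : 0 ≤ B)
    (hB : ∀ y ∈ Set.Icc (0 : ℝ) 1, P.eval y ≤ B)
    (hP : ∀ y ∈ Set.Icc (0 : ℝ) 1, y ∉ Set.Icc (Real.exp (-β)) (Real.exp (-α)) → P.eval y ≤ 0) :
    ∑' n : ℕ, a n * ((n : ℝ) ^ (-(Real.log x)⁻¹) * P.eval ((n : ℝ) ^ (-(Real.log x)⁻¹))) ≤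
      B * ∑ n ∈ Finset.Icc ⌈x ^ α⌉₊ ⌊x ^ β⌋₊, a n := by
  have ht : 0 < (Real.log x)⁻¹ := inv_pos.2 (Real.log_pos hx)
  have hmem := fun n : ℕ => natCast_rpow_neg_mem_Icc n ht
  have hoff : ∀ n ∉ Finset.Icc ⌈x ^ α⌉₊ ⌊x ^ β⌋₊,
      a n * ((n : ℝ) ^ (-(Real.log x)⁻¹) * P.eval ((n : ℝ) ^ (-(Real.log x)⁻¹))) ≤ 0 := fun n hn =>
    mul_nonpos_of_nonneg_of_nonpos (ha0 n) (mul_nonpos_of_nonneg_of_nonpos (hmem n).1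
      (hP _ (hmem n) fun h => hn (mem_Icc_of_rpow_neg_inv_log_mem hx h)))
  have hsum := (summable_mul_eval_rpow ha P ht).neg.sum_le_tsum
    (Finset.Icc ⌈x ^ α⌉₊ ⌊x ^ β⌋₊) fun n hn => neg_nonneg.2 (hoff n hn)
  rw [tsum_neg, Finset.sum_neg_distrib, neg_le_neg_iff] at hsum
  rw [Finset.mul_sum]
  refine hsum.trans (Finset.sum_le_sum fun n _ => ?_)
  rw [mul_comm B]
  refine mul_le_mul_of_nonneg_left ?_ (ha0 n)
  exact (mul_le_mul_of_nonneg_left (hB _ (hmem n)) (hmem n).1).trans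
    (mul_le_of_le_one_left hB0 (hmem n).2)

-- Karamata's argument: the weights `t * a n * n ^ (-t)` at the points `n ^ (-t)` converge to `A`
-- times Lebesgue measure on `[0, 1]`, and for `t = 1 / log x` the window becomes
-- `[exp (-β), exp (-α)]`; a polynomial nonpositive off that interval bounds its mass from below.
theorem exists_eventually_mul_log_le_sum_Icc {a : ℕ → ℝ} {A α β : ℝ} (ha0 : ∀ n, 0 ≤ a n)
    (ha : ∀ t : ℝ, 0 < t → Summable fun n => a n * (n : ℝ) ^ (-t)) (hA0 : 0 < A)
    (hA : Tendsto (fun t : ℝ => t * ∑' n, a n * (n : ℝ) ^ (-t)) (𝓝[>] 0) (𝓝 A))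
    (hα : 0 ≤ α) (hαβ : α < β) :
    ∃ c : ℝ, 0 < c ∧ ∀ᶠ x : ℝ in atTop,
      c * Real.log x ≤ ∑ n ∈ Finset.Icc ⌈x ^ α⌉₊ ⌊x ^ β⌋₊, a n := by
  obtain ⟨P, hP, hPI⟩ := exists_polynomial_integral_pos_of_nonpos_off (Real.exp_pos (-β)).le
    (Real.exp_lt_exp.2 (neg_lt_neg hαβ)) (Real.exp_le_one_iff.2 (neg_nonpos.2 hα))
  obtain ⟨B, hB⟩ := isCompact_Icc.exists_bound_of_continuousOn (s := Set.Icc (0 : ℝ) 1)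
    P.continuous.continuousOn
  have hL : 0 < A * ∫ y in (0 : ℝ)..1, P.eval y := mul_pos hA0 hPI
  have hB0 : 0 ≤ B := (norm_nonneg _).trans (hB 0 ⟨le_rfl, zero_le_one⟩)
  have hlog : Tendsto (fun x : ℝ => (Real.log x)⁻¹) atTop (𝓝[>] 0) :=
    tendsto_inv_atTop_nhdsGT_zero.comp Real.tendsto_log_atTop
  refine ⟨_, div_pos (half_pos hL) (add_pos_of_nonneg_of_pos hB0 one_pos), ?_⟩
  filter_upwards [((tendsto_mul_tsum_eval_rpow ha hA P).comp hlog).eventually_const_le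
    (half_lt_self hL), eventually_gt_atTop 1] with x hx hx1
  rw [Function.comp_apply, ← div_eq_inv_mul, le_div_iff₀ (Real.log_pos hx1)] at hx
  rw [div_mul_eq_mul_div, div_le_iff₀' (by positivity)]
  exact hx.trans (tsum_mul_eval_rpow_le ha0 ha hx1 (by positivity)
    (fun y hy => ((le_abs_self _).trans (hB y hy)).trans (lt_add_one B).le) hP)

end Karamata

section PrimesInClass

open ArithmeticFunction vonMangoldt Filter Topology

variable {q : ℕ}

open Complex in
theorem tsum_residueClass_div_rpow [NeZero q] {a : ZMod q} (ha : IsUnit a) {x : ℝ}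
    (hx : 1 < x) :
    ∑' n, residueClass a n / (n : ℝ) ^ x =
      (LFunctionResidueClassAux a x).re + (q.totient : ℝ)⁻¹ / (x - 1) := by
  refine ofReal_injective ?_
  simp only [ofReal_tsum, ofReal_div, ofReal_cpow (Nat.cast_nonneg _), ofReal_natCast, ofReal_add,
    ofReal_inv, ofReal_sub, ofReal_one]
  simp_rw [← LFunctionResidueClassAux_real ha hx,
    eqOn_LFunctionResidueClassAux ha <| Set.mem_ofPred.mpr (ofReal_re x ▸ hx), sub_add_cancel,
    LSeries, LSeries.term]
  refine tsum_congr fun n => ?_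
  split_ifs with hn
  · simp only [hn, residueClass_apply_zero, ofReal_zero, zero_div]
  · rfl

theorem residueClass_div_mul_rpow_neg (a : ZMod q) (t : ℝ) (n : ℕ) :
    residueClass a n / n * (n : ℝ) ^ (-t) = residueClass a n / (n : ℝ) ^ (1 + t) := by
  rcases n.eq_zero_or_pos with rfl | hn
  · simp only [residueClass_apply_zero, zero_div, zero_mul]
  · rw [Real.rpow_add (Nat.cast_pos.2 hn), Real.rpow_one, Real.rpow_neg n.cast_nonneg, ← div_div,
      div_eq_mul_inv _ ((n : ℝ) ^ t)]

theorem summable_residueClass_div_mul_rpow_neg [NeZero q] (a : ZMod q) {t : ℝ}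
    (ht : 0 < t) : Summable fun n : ℕ => residueClass a n / n * (n : ℝ) ^ (-t) := by
  simp only [residueClass_div_mul_rpow_neg]
  exact LSeries.summable_real_of_abscissaOfAbsConv_lt
    ((abscissaOfAbsConv_residueClass_le_one a).trans_lt (mod_cast by linarith))

open Complex in
theorem tendsto_mul_tsum_residueClass_div [NeZero q] {a : ZMod q} (ha : IsUnit a) :
    Tendsto (fun t : ℝ => t * ∑' n : ℕ, residueClass a n / n * (n : ℝ) ^ (-t)) (𝓝[>] 0)
      (𝓝 (q.totient : ℝ)⁻¹) := by
  have hcont : ContinuousOn (fun x : ℝ => (LFunctionResidueClassAux a x).re) (Set.Ici 1) :=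
    continuous_re.comp_continuousOn
      ((continuousOn_LFunctionResidueClassAux a).comp continuous_ofReal.continuousOn
        fun x hx => by simpa using hx)
  have hshift : Tendsto (fun t : ℝ => 1 + t) (𝓝[>] 0) (𝓝[≥] 1) :=
    tendsto_nhdsWithin_iff.2 ⟨by simpa using
        ((tendsto_id (x := 𝓝 (0 : ℝ))).const_add 1).mono_left nhdsWithin_le_nhds,
      eventually_mem_nhdsWithin.mono fun t (ht : 0 < t) => Set.mem_Ici.2 (by linarith)⟩
  have hlim := ((tendsto_id (x := 𝓝 (0 : ℝ))).mono_left nhdsWithin_le_nhds).mul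
    ((hcont 1 Set.self_mem_Ici).tendsto.comp hshift) |>.add_const (q.totient : ℝ)⁻¹
  rw [zero_mul, zero_add] at hlim
  refine hlim.congr' (eventually_mem_nhdsWithin.mono fun t (ht : 0 < t) => ?_)
  simp only [residueClass_div_mul_rpow_neg]
  rw [tsum_residueClass_div_rpow ha (by linarith), add_sub_cancel_left, mul_add,
    mul_div_cancel₀ _ ht.ne']
  rfl

theorem residueClass_div_le_of_mem_Icc (a : ZMod q) {α β x : ℝ} (hx : 1 < x) {n : ℕ}
    (hn : n ∈ Finset.Icc ⌈x ^ α⌉₊ ⌊x ^ β⌋₊) :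
    residueClass a n / n ≤ β * Real.log x / x ^ α := by
  have hx0 : 0 < x := one_pos.trans hx
  rw [Finset.mem_Icc, Nat.ceil_le, Nat.le_floor_iff (Real.rpow_nonneg hx0.le _)] at hn
  have hn0 : (0 : ℝ) < n := (Real.rpow_pos_of_pos hx0 α).trans_le hn.1
  have hlog : Real.log n ≤ β * Real.log x := by
    rw [← Real.log_rpow hx0]
    exact Real.log_le_log hn0 hn.2
  refine div_le_div₀ ?_ ?_ (Real.rpow_pos_of_pos hx0 α) hn.1
  · exact (Real.log_natCast_nonneg n).trans hlog
  · exact ((residueClass_le a n).trans vonMangoldt_le_log).trans hlog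

/-- The primes in `[m, n]` lying in the residue class `a`. -/
def primesIcc (a : ZMod q) (m n : ℕ) : Finset ℕ :=
  {z ∈ Finset.Icc m n | Nat.Prime z ∧ (z : ZMod q) = a}

theorem sum_residueClass_div_le (a : ZMod q) {α β x : ℝ} (hx : 1 < x) :
    ∑ n ∈ Finset.Icc ⌈x ^ α⌉₊ ⌊x ^ β⌋₊, residueClass a n / n ≤
      ∑' n : ℕ, (if n.Prime then 0 else residueClass a n) / n +
        (primesIcc a ⌈x ^ α⌉₊ ⌊x ^ β⌋₊).card * (β * Real.log x / x ^ α) := by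
  have hsplit : ∀ n ∈ Finset.Icc ⌈x ^ α⌉₊ ⌊x ^ β⌋₊, residueClass a n / (n : ℝ) ≤
      (if n.Prime then 0 else residueClass a n) / (n : ℝ) +
        if n.Prime ∧ (n : ZMod q) = a then β * Real.log x / x ^ α else 0 := fun n hn => by
    by_cases hna : (n : ZMod q) = a <;> by_cases hnp : n.Prime
    · simpa [hna, hnp] using residueClass_div_le_of_mem_Icc a hx hn
    · simp [hna, hnp]
    · simp [hna, hnp]
    · simp [hna, hnp]
  refine (Finset.sum_le_sum hsplit).trans ?_
  rw [Finset.sum_add_distrib, ← Finset.sum_filter, Finset.sum_const, nsmul_eq_mul, ← primesIcc]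
  refine add_le_add_left ((summable_residueClass_non_primes_div a).sum_le_tsum _ fun n _ => ?_) _
  have := residueClass_nonneg a n
  positivity

theorem exists_eventually_mul_rpow_le_card_primesIcc [NeZero q] {a : ZMod q} (ha : IsUnit a)
    {α β : ℝ} (hα : 0 ≤ α) (hαβ : α < β) : ∃ c : ℝ, 0 < c ∧ ∀ᶠ x : ℝ in atTop,
      c * x ^ α ≤ (primesIcc a ⌈x ^ α⌉₊ ⌊x ^ β⌋₊).card := by
  obtain ⟨c, hc, hsum⟩ := exists_eventually_mul_log_le_sum_Icc
    (fun n => div_nonneg (residueClass_nonneg a n) n.cast_nonneg)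
    (fun t ht => summable_residueClass_div_mul_rpow_neg a ht)
    (inv_pos.2 (Nat.cast_pos.2 (Nat.totient_pos.2 (NeZero.pos q))))
    (tendsto_mul_tsum_residueClass_div ha) hα hαβ
  have hβ : 0 < β := hα.trans_lt hαβ
  refine ⟨c / (2 * β), by positivity, ?_⟩
  filter_upwards [hsum, eventually_gt_atTop 1, Real.tendsto_log_atTop.eventually_ge_atTop
    (2 * (∑' n : ℕ, (if n.Prime then 0 else residueClass a n) / n) / c)] with x hx hx1 hxT
  rw [div_le_iff₀ hc] at hxT
  have hlog : 0 < Real.log x := Real.log_pos hx1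
  have hxα : 0 < x ^ α := Real.rpow_pos_of_pos (one_pos.trans hx1) α
  have hcount := hx.trans (sum_residueClass_div_le a hx1)
  set N : ℝ := ((primesIcc a ⌈x ^ α⌉₊ ⌊x ^ β⌋₊).card : ℝ)
  have hmain : c / 2 * Real.log x ≤ N * β / x ^ α * Real.log x := by
    rw [show N * β / x ^ α * Real.log x = N * (β * Real.log x / x ^ α) by ring]
    linarith
  rw [div_mul_eq_mul_div, div_le_iff₀ (by positivity)]
  have := (le_div_iff₀ hxα).1 (le_of_mul_le_mul_right hmain hlog)
  linarith

theorem eventually_le_card_primesIcc [NeZero q] {a : ZMod q} (ha : IsUnit a) (k : ℕ) :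
    ∀ᶠ u : ℕ in atTop,
      u ^ k ≤ (primesIcc a (u ^ k) (u ^ (k + 1))).card := by
  obtain ⟨c, hc, hcard⟩ := exists_eventually_mul_rpow_le_card_primesIcc ha
    (α := k + 1 / 2) (β := (k + 1 : ℕ)) (by positivity) (by push_cast; linarith)
  filter_upwards [tendsto_natCast_atTop_atTop.eventually hcard, eventually_ge_atTop 1,
    tendsto_natCast_atTop_atTop.eventually
      ((tendsto_rpow_atTop one_half_pos).eventually_ge_atTop (c⁻¹ : ℝ))] with u hu hu1 huc
  have hu1' : (1 : ℝ) ≤ u := Nat.one_le_cast.2 hu1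
  have hsplit : (u : ℝ) ^ ((k : ℝ) + 1 / 2) = u ^ k * (u : ℝ) ^ (1 / 2 : ℝ) := by
    rw [Real.rpow_add (by linarith), Real.rpow_natCast]
  have hlow : (u : ℝ) ^ k ≤ c * (u : ℝ) ^ ((k : ℝ) + 1 / 2) := by
    rw [inv_le_iff_one_le_mul₀' hc] at huc
    rw [hsplit, mul_left_comm]
    exact le_mul_of_one_le_right (by positivity) huc
  have hk : u ^ k ≤ ⌈(u : ℝ) ^ ((k : ℝ) + 1 / 2)⌉₊ := by
    refine Nat.cast_le.1 (le_trans ?_ (Nat.le_ceil _))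
    rw [Nat.cast_pow, hsplit]
    exact le_mul_of_one_le_right (by positivity) (Real.one_le_rpow hu1' one_half_pos.le)
  have hfloor : ⌊(u : ℝ) ^ ((k + 1 : ℕ) : ℝ)⌋₊ = u ^ (k + 1) := by
    rw [Real.rpow_natCast, ← Nat.cast_pow, Nat.floor_natCast]
  rw [hfloor] at hu
  refine Nat.cast_le.1 ((Nat.cast_pow u k).trans_le ((hlow.trans hu).trans (Nat.cast_le.2 ?_)))
  exact Finset.card_le_card (Finset.filter_subset_filter _ (Finset.Icc_subset_Icc_left hk))

end PrimesInClass

theorem lcmUpto_le_pow (Y : ℕ) : Y.lcmUpto ≤ 512 ^ Y := by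
  have hψ := Chebyshev.psi_le_const_mul_self (x := Y) Y.cast_nonneg
  rw [Chebyshev.psi_eq_log_lcmUpto] at hψ
  have hpos : (0 : ℝ) < Y.lcmUpto := Nat.cast_pos.2 (Nat.lcmUpto_pos Y)
  have hlog : Real.log 4 + 4 ≤ Real.log 512 := by
    rw [show (4 : ℝ) = 2 ^ 2 by norm_num, show (512 : ℝ) = 2 ^ 9 by norm_num, Real.log_pow,
      Real.log_pow]
    have := Real.log_two_gt_d9
    push_cast
    linarith
  have hle : Real.log Y.lcmUpto ≤ Real.log ((512 : ℝ) ^ Y) := by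
    rw [Real.log_pow, mul_comm]
    exact hψ.trans (mul_le_mul_of_nonneg_right hlog Y.cast_nonneg)
  exact_mod_cast (Real.log_le_log_iff hpos (by positivity)).1 hle

open Filter in
theorem eventually_exists_common_multiple (M : ℕ) : ∀ᶠ u : ℕ in atTop, ∃ Y C : ℕ,
    1 ≤ Y ∧ Y ≤ u ∧ 0 < C ∧ C ≤ u ∧ (∀ c ∈ Finset.Icc 1 Y, c ∣ C) ∧ 4 * u ^ M < Y ^ Y := by
  set B := 4 * 512 ^ (2 * M) with hB
  filter_upwards [eventually_ge_atTop (512 ^ (B + 1))] with u hu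
  have hu0 : u ≠ 0 := ((Nat.pow_pos (by norm_num)).trans_le hu).ne'
  have hBY : B < Nat.log 512 u := (Nat.le_log_iff_pow_le (by norm_num) hu0).2 hu
  set Y := Nat.log 512 u
  have hY : 1 ≤ Y := Nat.one_le_of_lt hBY
  have hYu : 512 ^ Y ≤ u := Nat.pow_log_le_self 512 hu0
  refine ⟨Y, Y.lcmUpto, hY, (Nat.lt_pow_self (by norm_num)).le.trans hYu, Nat.lcmUpto_pos Y,
    (lcmUpto_le_pow Y).trans hYu, fun c hc => Finset.dvd_lcm (f := id) hc, ?_⟩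
  calc 4 * u ^ M ≤ 4 * (512 ^ (Y + 1)) ^ M := by
        gcongr
        exact (Nat.lt_pow_succ_log_self (by norm_num) u).le
    _ ≤ 4 ^ Y * 512 ^ (2 * M * Y) := by
        refine Nat.mul_le_mul (Nat.le_self_pow (by omega) 4) ?_
        rw [← pow_mul]
        exact Nat.pow_le_pow_right (by norm_num) (by nlinarith)
    _ = B ^ Y := by rw [hB, mul_pow, ← pow_mul]
    _ < Y ^ Y := Nat.pow_lt_pow_left hBY (by omega)

theorem exists_pow_eq_one_ne_one {p q : ℕ} [Fact q.Prime] (hp : p.Prime) (hq : (q : ZMod p) = 1) :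
    ∃ ζ : ZMod q, ζ ^ p = 1 ∧ ζ ≠ 1 := by
  have : Fact p.Prime := ⟨hp⟩
  have hdvd : p ∣ Fintype.card (ZMod q)ˣ := by
    rw [ZMod.card_units, ← ZMod.natCast_eq_zero_iff, Nat.cast_sub (Fact.out : q.Prime).one_le, hq,
      Nat.cast_one, sub_self]
  obtain ⟨x, hx⟩ := exists_prime_orderOf_dvd_card p hdvd
  refine ⟨x, ?_, fun h => hp.one_lt.ne' ?_⟩
  · rw [← Units.val_pow_eq_pow_val, ← hx, pow_orderOf_eq_one, Units.val_one]
  · rw [← hx, orderOf_eq_one_iff, ← Units.val_eq_one, h]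

theorem odd_powQuot {p a b : ℕ} (hp : Odd p) (ha : Odd a) (hb : Odd b) : Odd (powQuot p a b) := by
  rw [← ZMod.natCast_eq_one_iff_odd] at *
  rw [powQuot, Nat.cast_sum]
  push_cast
  simp only [ha, hb, one_pow, mul_one, Finset.sum_const, Finset.card_range, nsmul_eq_mul, hp]

-- With `ζ` a nontrivial `p`-th root of unity modulo `q`, the congruence `w ≡ e / (1 - ζ)`
-- makes `w - e ≡ ζ w`.
theorem exists_dvd_powQuot {p q e : ℕ} (hp : p.Prime) (hq : q.Prime) (hqp : (q : ZMod p) = 1)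
    (hqe : ¬ q ∣ e) :
    ∃ t : ℕ, ∀ w, e ≤ w → w ≡ t [MOD q] → q ∣ powQuot p w (w - e) := by
  have : Fact q.Prime := ⟨hq⟩
  obtain ⟨ζ, hζ, hζ1⟩ := exists_pow_eq_one_ne_one hp hqp
  refine ⟨((e : ZMod q) / (1 - ζ)).val, fun w hew hw => ?_⟩
  have hwt : (w : ZMod q) = e / (1 - ζ) := by
    rw [(ZMod.natCast_eq_natCast_iff _ _ _).2 hw, ZMod.natCast_zmod_val]
  have hwe : ((w - e : ℕ) : ZMod q) = ζ * w := by
    rw [Nat.cast_sub hew, hwt]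
    field_simp [sub_ne_zero.2 hζ1.symm]
    ring
  have heq := congr_arg (Nat.cast (R := ZMod q)) (add_pow_eq_pow_add_mul_powQuot p (w - e) e)
  rw [Nat.sub_add_cancel hew, Nat.cast_add, Nat.cast_pow, Nat.cast_pow, hwe, mul_pow, hζ, one_mul,
    left_eq_add, ZMod.natCast_eq_zero_iff] at heq
  exact (hq.dvd_mul.1 heq).resolve_left hqe

theorem exists_modEq_mem_Ico {m n : ℕ} (hmn : m.Coprime n) (hm : m ≠ 0) (hn : n ≠ 0) (a b j : ℕ)
    {s : ℕ} (hs : ¬ s ∣ m * n) :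
    ∃ w ∈ Finset.Ico (2 * (m * n) * j) (2 * (m * n) * (j + 1)),
      w ≡ a [MOD m] ∧ w ≡ b [MOD n] ∧ ¬ s ∣ w := by
  obtain ⟨x, hlt, hxa, hxb⟩ : ∃ x < m * n, x ≡ a [MOD m] ∧ x ≡ b [MOD n] :=
    ⟨_, Nat.chineseRemainder_lt_mul hmn a b hm hn, (Nat.chineseRemainder hmn a b).2⟩
  have hmod : ∀ k, x + m * n * k ≡ a [MOD m] ∧ x + m * n * k ≡ b [MOD n] := fun k =>
    ⟨((Nat.modEq_iff_dvd' (Nat.le_add_right _ _)).2 ⟨n * k, by rw [Nat.add_sub_cancel_left,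
      mul_assoc]⟩).symm.trans hxa, ((Nat.modEq_iff_dvd' (Nat.le_add_right _ _)).2 ⟨m * k, by
        rw [Nat.add_sub_cancel_left]; ring⟩).symm.trans hxb⟩
  by_cases hsw : s ∣ x + m * n * (2 * j)
  · refine ⟨x + m * n * (2 * j + 1), Finset.mem_Ico.2 ⟨?_, ?_⟩, (hmod _).1, (hmod _).2, fun h => ?_⟩
    · nlinarith
    · nlinarith
    · rw [mul_add, ← add_assoc, mul_one] at h
      exact hs ((Nat.dvd_add_right hsw).1 h)
  · refine ⟨x + m * n * (2 * j), Finset.mem_Ico.2 ⟨?_, ?_⟩, (hmod _).1, (hmod _).2, hsw⟩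
    · nlinarith
    · nlinarith

theorem coprime_sub_of_modEq_one {C s w : ℕ} (hs : s.Prime) (hw : w ≡ 1 [MOD 2 * C])
    (hsw : ¬ s ∣ w) (hle : 4 * C * s ≤ w) : Nat.Coprime w (w - 4 * C * s) := by
  have h2C : Nat.Coprime w (2 * C) := by
    rw [Nat.Coprime, hw.gcd_eq, Nat.gcd_one_left]
  rw [Nat.coprime_self_sub_right hle, show 4 * C * s = 2 * (2 * C) * s by ring]
  exact (h2C.coprime_mul_right_right.mul_right h2C).mul_right
    (hs.coprime_iff_not_dvd.2 hsw).symm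

theorem exists_powerPair {p C q s : ℕ} (hp : p.Prime) (hC : 0 < C) (hq : q.Prime)
    (hqp : (q : ZMod p) = 1) (hs : s.Prime) (hqC : ¬ q ∣ 2 * C) (hsC : ¬ s ∣ 2 * C) (hsq : s ≠ q)
    {j : ℕ} (hj : 4 * C * s + 1 < 4 * C * q * j) :
    ∃ w ∈ Finset.Ico (4 * C * q * j) (4 * C * q * (j + 1)), Odd w ∧
      ∃ f, PowerPair p C s q f w (w - 4 * C * s) := by
  have hqe : ¬ q ∣ 4 * C * s := fun h => by
    rw [show 4 * C * s = 2 * (2 * C) * s by ring] at h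
    rcases hq.dvd_mul.1 h with h | h
    · exact (hq.dvd_mul.1 h).elim (fun h => hqC (h.mul_right C)) hqC
    · exact hsq ((Nat.prime_dvd_prime_iff_eq hq hs).1 h).symm
  obtain ⟨t, ht⟩ := exists_dvd_powQuot hp hq hqp hqe
  obtain ⟨w, hw, hw1, hwt, hsw⟩ := exists_modEq_mem_Ico ((hq.coprime_iff_not_dvd.2 hqC).symm)
    (by omega) hq.ne_zero 1 t j (s := s) (fun h => (hs.dvd_mul.1 h).elim hsC fun h =>
      hsq ((Nat.prime_dvd_prime_iff_eq hs hq).1 h))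
  rw [show 2 * (2 * C * q) = 4 * C * q by ring] at hw
  have hlow := (Finset.mem_Ico.1 hw).1
  have hle : 4 * C * s ≤ w := by omega
  obtain ⟨f, hf⟩ := ht w hle hwt
  exact ⟨w, hw, Nat.odd_iff.2 (hw1.of_dvd (Dvd.intro C rfl)), f,
    coprime_sub_of_modEq_one hs hw1 hsw hle, by omega, by omega, hf⟩

/-! ### Admissible pairs at scale `u` -/

open Filter in
theorem ABCConjecture.eventually_add_le_mul_radical (habc : ABCConjecture) (M : ℕ) :
    ∀ᶠ u : ℕ in atTop, ∀ a b : ℕ, 0 < a → 0 < b → a.Coprime b → a + b ≤ u ^ M →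
      a + b ≤ u * radical (a * b * (a + b)) := by
  set n := 2 * (M + 1) with hn
  obtain ⟨K, _, h⟩ := habc (n : ℝ)⁻¹ (by positivity)
  filter_upwards [eventually_ge_atTop ⌈K ^ 2⌉₊, eventually_ge_atTop 1]
    with u hKu hu a b ha hb hab hc
  have hKsqrt : K ≤ √u := Real.le_sqrt_of_sq_le ((Nat.le_ceil _).trans (by exact_mod_cast hKu))
  set r := radical (a * b * (a + b)) with hr
  have hprod : (∏ ℓ ∈ (a * b * (a + b)).primeFactors, (ℓ : ℝ)) = r := by
    rw [hr, Nat.radical_eq_prod_primeFactors, Nat.cast_prod]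
  have hlt := h a b (a + b) ha hb (by omega) hab (by simpa using hab) (by simpa using hab.symm) rfl
  rw [hprod] at hlt
  rcases le_or_gt (a + b) r with hle | hrc
  · exact hle.trans (Nat.le_mul_of_pos_left r hu)
  have hr0 : (0 : ℝ) < r := by exact_mod_cast Nat.radical_pos _
  have hroot : (r : ℝ) ^ (n : ℝ)⁻¹ ≤ √u := by
    rw [← Real.pow_rpow_inv_natCast (Real.sqrt_nonneg u) (by omega : n ≠ 0)]
    refine Real.rpow_le_rpow hr0.le ?_ (by positivity)
    rw [hn, pow_mul, Real.sq_sqrt (by positivity)]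
    exact_mod_cast (hrc.le.trans hc).trans (Nat.pow_le_pow_right hu M.le_succ)
  have : ((a + b : ℕ) : ℝ) ≤ u * r := by
    calc ((a + b : ℕ) : ℝ) ≤ K * (r : ℝ) ^ (1 + (n : ℝ)⁻¹) := hlt.le
      _ = K * (r * (r : ℝ) ^ (n : ℝ)⁻¹) := by rw [Real.rpow_add hr0, Real.rpow_one]
      _ ≤ √u * (r * √u) := by gcongr
      _ = √u * √u * r := by ring
      _ = u * r := by rw [Real.mul_self_sqrt (by positivity)]
  exact_mod_cast this

/-- The parameters of the construction at scale `u`: the size `U = u¹⁰⁰ V` of the pairs of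
integers, the bound `Y` for small multipliers and their common multiple `C`, together with the
estimates for divisors, roots of unity, primes and abc-triples that hold once `u` is large. -/
structure Scale (p u U V Y C : ℕ) : Prop where
  prime : p.Prime
  five_le : 5 ≤ p
  mul_two_pow_le : p * 2 ^ (p + 4) ≤ u
  eq_mul : U = u ^ 100 * V
  le_V : u ^ 100 ≤ V
  Y_le : Y ≤ u
  C_pos : 0 < C
  C_le : C ≤ u
  dvd_C : ∀ c ∈ Finset.Icc 1 Y, c ∣ C
  lt_pow : 4 * U ^ 2 < Y ^ Y
  card_divisors_le : ∀ n, n ≠ 0 → n ≤ U ^ (2 * p) → n.divisors.card ≤ u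
  card_rootsOfUnity_le : ∀ n, Odd n → n ≤ U ^ (2 * p) → Nat.card (rootsOfUnity p (ZMod n)) ≤ u
  add_le_mul_radical : ∀ a b : ℕ, 0 < a → 0 < b → a.Coprime b → a + b ≤ U ^ (2 * p) →
    a + b ≤ u * radical (a * b * (a + b))
  le_card_primesIcc : ∀ k < 100,
    V * u ^ k ≤ (primesIcc (1 : ZMod p) (V * u ^ k) (V * u ^ (k + 1))).card

open Filter in
theorem ABCConjecture.eventually_exists_scale (habc : ABCConjecture) {p m : ℕ} (hp : p.Prime)
    (hp5 : 5 ≤ p) (hm : 200 ≤ m) :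
    ∀ᶠ u : ℕ in atTop, ∃ Y C, Scale p u (u ^ m) (u ^ (m - 100)) Y C := by
  have : NeZero p := ⟨hp.ne_zero⟩
  filter_upwards [eventually_ge_atTop (p * 2 ^ (p + 4)), eventually_exists_common_multiple (m * 2),
    eventually_card_divisors_pow_le 1 (m * (2 * p)),
    eventually_card_rootsOfUnity_zmod_le hp.pos (m * (2 * p)),
    habc.eventually_add_le_mul_radical (m * (2 * p)),
    (eventually_all_finset (Finset.range 100)).2 fun k _ =>
      eventually_le_card_primesIcc (isUnit_one (M := ZMod p)) (m - 100 + k)]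
    with u hu ⟨Y, C, _, hYu, hC, hCu, hdvd, hlt⟩ hdiv hroots hrad hprimes
  simp only [pow_one, pow_mul] at hdiv hlt hroots hrad
  have hu0 : 0 < u := (Nat.mul_pos hp.pos (by positivity)).trans_le hu
  refine ⟨Y, C, hp, hp5, hu, ?_, Nat.pow_le_pow_right hu0 (by omega), hYu, hC, hCu, hdvd, hlt,
    ?_, ?_, ?_, fun k hk => ?_⟩
  · rw [← pow_add]; congr 1; omega
  iterate 3 simpa only [pow_mul]
  · simpa only [← pow_add, add_assoc] using hprimes k (Finset.mem_range.2 hk)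

namespace Scale

variable {p u U V Y C : ℕ}

theorem thousand_le (h : Scale p u U V Y C) : 1000 ≤ u := by
  have h5 : 2 ^ 9 ≤ 2 ^ (p + 4) :=
    Nat.pow_le_pow_right (by norm_num) (by have := h.five_le; omega)
  exact (by norm_num : 1000 ≤ 5 * 2 ^ 9).trans
    ((Nat.mul_le_mul h.five_le h5).trans h.mul_two_pow_le)

theorem four_mul_le (h : Scale p u U V Y C) : 4 * p ≤ u := by
  rw [mul_comm]
  refine (Nat.mul_le_mul_left p ?_).trans h.mul_two_pow_le
  calc 4 = 2 ^ 2 := rfl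
    _ ≤ 2 ^ (p + 4) := Nat.pow_le_pow_right (by norm_num) (by omega)

theorem V_pos (h : Scale p u U V Y C) : 0 < V :=
  (Nat.pow_pos (by have := h.thousand_le; omega)).trans_le h.le_V

theorem mul_le_U (h : Scale p u U V Y C) {k : ℕ} (hk : k ≤ 100) : V * u ^ k ≤ U := by
  rw [h.eq_mul, mul_comm]
  gcongr
  have := h.thousand_le; omega

theorem U_pos (h : Scale p u U V Y C) : 0 < U :=
  (Nat.mul_pos h.V_pos (by norm_num)).trans_le (h.mul_le_U (Nat.zero_le 100))

theorem u_le_U (h : Scale p u U V Y C) : u ≤ U :=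
  calc u ≤ V * u ^ 1 := by rw [pow_one]; exact Nat.le_mul_of_pos_left u h.V_pos
    _ ≤ U := h.mul_le_U (by norm_num)

end Scale

/-- A power pair with `w₁` of size `U`, whose parameters `q` and `s` have sizes `V u⁷⁰` and
at most `V u⁴⁰`. -/
structure ScaledPair (p u U V C q s f w₁ w₂ : ℕ) : Prop extends PowerPair p C s q f w₁ w₂ where
  odd : Odd w₁
  le_q : V * u ^ 69 ≤ q
  q_le : q ≤ V * u ^ 70
  s_le : s ≤ V * u ^ 40
  U_le : U ≤ w₁
  le_two_mul : w₁ ≤ 2 * U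

namespace ScaledPair

variable {p u U V Y C q s f w₁ w₂ : ℕ}

theorem mul_le (h : ScaledPair p u U V C q s f w₁ w₂) (hS : Scale p u U V Y C) :
    4 * C * s ≤ V * u ^ 42 := by
  have hu : 4 ≤ u := by have := hS.thousand_le; omega
  have := hS.C_le
  have := h.s_le
  calc 4 * C * s ≤ u * u * (V * u ^ 40) := by gcongr
    _ = V * u ^ 42 := by ring

theorem narrowPair (h : ScaledPair p u U V C q s f w₁ w₂) (hS : Scale p u U V Y C) :
    NarrowPair U (2 * U) (V * u ^ 42) (w₁, w₂) :=
  ⟨h.coprime, h.le, h.U_le, h.le_two_mul, h.eq_add.le.trans (Nat.add_le_add_left (h.mul_le hS) _)⟩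

theorem odd_powQuot (h : ScaledPair p u U V C q s f w₁ w₂) (hS : Scale p u U V Y C) :
    Odd (powQuot p w₁ w₂) := by
  have hw₂ : Odd w₂ := by
    have := h.odd
    rw [h.eq_add, mul_assoc, Nat.odd_add] at this
    exact this.2 ((show Even 4 by decide).mul_right _)
  exact _root_.odd_powQuot (hS.prime.odd_of_ne_two (by have := hS.five_le; omega)) h.odd hw₂

theorem pow_le_mul (h : ScaledPair p u U V C q s f w₁ w₂) (hS : Scale p u U V Y C) :
    w₁ ^ (p - 1) ≤ q * f :=
  h.powQuot_eq ▸ pow_le_powQuot hS.prime.ne_zero w₁ w₂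

theorem mul_le_mul_pow (h : ScaledPair p u U V C q s f w₁ w₂) (hS : Scale p u U V Y C) :
    q * f ≤ u * U ^ (p - 1) :=
  calc q * f ≤ p * w₁ ^ (p - 1) := h.powQuot_eq ▸ powQuot_le p h.le
    _ ≤ p * (2 * U) ^ (p - 1) := by gcongr; exact h.le_two_mul
    _ = p * 2 ^ (p - 1) * U ^ (p - 1) := by rw [mul_pow, mul_assoc]
    _ ≤ p * 2 ^ (p + 4) * U ^ (p - 1) := by gcongr <;> omega
    _ ≤ u * U ^ (p - 1) := Nat.mul_le_mul_right _ hS.mul_two_pow_le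

theorem le_factor (h : ScaledPair p u U V C q s f w₁ w₂) (hS : Scale p u U V Y C) :
    U ^ (p - 2) * u ^ 30 ≤ f := by
  have hu := hS.thousand_le
  have hV := hS.V_pos
  have hp : p - 1 = p - 2 + 1 := by have := hS.five_le; omega
  refine Nat.le_of_mul_le_mul_right (c := V * u ^ 70) ?_ (by positivity)
  calc U ^ (p - 2) * u ^ 30 * (V * u ^ 70) = U ^ (p - 2) * (u ^ 100 * V) := by ring
    _ = U ^ (p - 1) := by rw [← hS.eq_mul, hp, pow_succ]
    _ ≤ w₁ ^ (p - 1) := Nat.pow_le_pow_left h.U_le _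
    _ ≤ q * f := h.pow_le_mul hS
    _ ≤ f * (V * u ^ 70) := by rw [mul_comm]; exact Nat.mul_le_mul_left f h.q_le

theorem factor_le (h : ScaledPair p u U V C q s f w₁ w₂) (hS : Scale p u U V Y C) :
    f ≤ U ^ (p - 2) * u ^ 32 := by
  have hu := hS.thousand_le
  have hV := hS.V_pos
  have hp : p - 1 = p - 2 + 1 := by have := hS.five_le; omega
  refine Nat.le_of_mul_le_mul_right (c := V * u ^ 69) ?_ (by positivity)
  calc f * (V * u ^ 69) ≤ q * f := by rw [mul_comm q]; exact Nat.mul_le_mul_left f h.le_q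
    _ ≤ u * U ^ (p - 1) := h.mul_le_mul_pow hS
    _ = u * (U ^ (p - 2) * (u ^ 100 * V)) := by rw [hp, pow_succ, ← hS.eq_mul]
    _ = U ^ (p - 2) * u ^ 32 * (V * u ^ 69) := by ring

theorem powQuot_le_pow (h : ScaledPair p u U V C q s f w₁ w₂) (hS : Scale p u U V Y C) :
    powQuot p w₁ w₂ ≤ U ^ (2 * p) := by
  rw [h.powQuot_eq]
  calc q * f ≤ U * U ^ (p - 1) := (h.mul_le_mul_pow hS).trans (Nat.mul_le_mul_right _ hS.u_le_U)
    _ = U ^ p := by rw [← pow_succ', Nat.sub_add_cancel hS.prime.one_le]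
    _ ≤ U ^ (2 * p) := Nat.pow_le_pow_right hS.U_pos (by omega)

theorem radical_le (h : ScaledPair p u U V C q s f w₁ w₂) (hS : Scale p u U V Y C) :
    radical (w₂ ^ p * (4 * C * s * (q * f)) * w₁ ^ p) ≤
      w₁ ^ 2 * (V * u ^ 42 * (V * u ^ 70 * radical f)) := by
  have hle : ∀ a b : ℕ, radical (a * b) ≤ radical a * radical b := fun a b =>
    Nat.le_of_dvd (Nat.mul_pos (Nat.radical_pos a) (Nat.radical_pos b))
      UniqueFactorizationMonoid.radical_mul_dvd
  have hself : ∀ {a : ℕ}, 0 < a → radical a ≤ a := fun ha =>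
    Nat.le_of_dvd ha UniqueFactorizationMonoid.radical_dvd_self
  have hw₂ : 0 < w₂ := zero_lt_one.trans h.one_lt
  have hq := Nat.pos_of_mul_pos_right (h.mul_factor_pos hS.prime.ne_zero)
  calc radical (w₂ ^ p * (4 * C * s * (q * f)) * w₁ ^ p)
      ≤ radical (w₂ ^ p) * (radical (4 * C * s) * (radical q * radical f)) * radical (w₁ ^ p) := by
        refine (hle _ _).trans (Nat.mul_le_mul_right _ ((hle _ _).trans ?_))
        exact Nat.mul_le_mul_left _ ((hle _ _).trans (Nat.mul_le_mul_left _ (hle _ _)))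
    _ ≤ w₁ * (V * u ^ 42 * (V * u ^ 70 * radical f)) * w₁ := by
        rw [UniqueFactorizationMonoid.radical_pow w₂ hS.prime.ne_zero,
          UniqueFactorizationMonoid.radical_pow w₁ hS.prime.ne_zero]
        gcongr
        · exact (hself hw₂).trans h.le
        · exact (hself h.mul_pos).trans (h.mul_le hS)
        · exact (hself hq).trans h.q_le
        · exact hself (hw₂.trans_le h.le)
    _ = w₁ ^ 2 * (V * u ^ 42 * (V * u ^ 70 * radical f)) := by ring

theorem le_radical (h : ScaledPair p u U V C q s f w₁ w₂) (hS : Scale p u U V Y C) :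
    U ^ (p - 4) * u ^ 87 ≤ radical f := by
  have hu := hS.thousand_le
  have hV := hS.V_pos
  have hU := hS.U_pos
  have hw₂ := h.one_lt
  have hw₁ : 0 < w₁ := hU.trans_le h.U_le
  have hcop : Nat.Coprime (w₂ ^ p) (4 * C * s * (q * f)) :=
    ((h.coprime_mul hS.prime.ne_zero).coprime_dvd_left (dvd_mul_left _ _)).pow_left p
  have hpow : w₂ ^ p + 4 * C * s * (q * f) = w₁ ^ p := h.pow_eq.symm
  have hle : w₁ ^ p ≤ U ^ (2 * p) := by
    rw [pow_mul]
    refine Nat.pow_le_pow_left (h.le_two_mul.trans ?_) p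
    rw [sq]
    exact Nat.mul_le_mul_right U ((by omega : 2 ≤ u).trans hS.u_le_U)
  have habc := hS.add_le_mul_radical _ _ (by positivity)
    (Nat.mul_pos h.mul_pos (h.mul_factor_pos hS.prime.ne_zero)) hcop (hpow.trans_le hle)
  rw [hpow] at habc
  refine le_of_mul_le_mul_left (a := w₁ ^ 2 * (V * u ^ 42 * (V * u ^ 70) * u)) ?_
    (by positivity)
  calc w₁ ^ 2 * (V * u ^ 42 * (V * u ^ 70) * u) * (U ^ (p - 4) * u ^ 87)
      = w₁ ^ 2 * (U ^ (p - 4) * (u ^ 100 * V) ^ 2) := by ring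
    _ = w₁ ^ 2 * U ^ (p - 2) := by
        rw [← hS.eq_mul, ← pow_add]
        congr 2
        have := hS.five_le
        omega
    _ ≤ w₁ ^ 2 * w₁ ^ (p - 2) := by gcongr; exact h.U_le
    _ = w₁ ^ p := by rw [← pow_add]; congr 1; have := hS.five_le; omega
    _ ≤ u * (w₁ ^ 2 * (V * u ^ 42 * (V * u ^ 70 * radical f))) :=
        habc.trans (Nat.mul_le_mul_left u (h.radical_le hS))
    _ = w₁ ^ 2 * (V * u ^ 42 * (V * u ^ 70) * u) * radical f := by ring

theorem sq_divisor_le (h : ScaledPair p u U V C q s f w₁ w₂) (hS : Scale p u U V Y C) {D t : ℕ}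
    (hf : f = D * (radical f * t ^ 2)) : D ≤ V ^ 2 * u ^ 145 := by
  have hu := hS.thousand_le
  have hU := hS.U_pos
  have ht : 0 < t := Nat.pos_of_ne_zero fun ht => by
    have := h.mul_factor_pos hS.prime.ne_zero
    rw [hf, ht] at this
    exact absurd this (by norm_num)
  have hp : p - 2 = p - 4 + 2 := by have := hS.five_le; omega
  refine le_of_mul_le_mul_right (a := U ^ (p - 4) * u ^ 87) ?_ (by positivity)
  calc D * (U ^ (p - 4) * u ^ 87) ≤ D * (radical f * t ^ 2) :=
        Nat.mul_le_mul_left D ((h.le_radical hS).trans (Nat.le_mul_of_pos_right _ (by positivity)))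
    _ ≤ U ^ (p - 2) * u ^ 32 := hf ▸ h.factor_le hS
    _ = U ^ (p - 4) * (u ^ 100 * V) ^ 2 * u ^ 32 := by rw [hp, pow_add, ← hS.eq_mul]
    _ = V ^ 2 * u ^ 145 * (U ^ (p - 4) * u ^ 87) := by ring

theorem sq_not_dvd_of_five (h : ScaledPair 5 u U V C q s f w₁ w₂) (hS : Scale 5 u U V Y C) {B : ℕ}
    (hB : V ^ 2 * u ^ 130 < B) : ¬ B ^ 2 ∣ f := fun hdvd => by
  have hV := hS.V_pos
  have hf : 0 < f := Nat.pos_of_mul_pos_left (h.mul_factor_pos (by norm_num))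
  have hlt : V ^ 3 * u ^ 260 * V < V ^ 3 * u ^ 260 * u ^ 72 := by
    calc V ^ 3 * u ^ 260 * V = (V ^ 2 * u ^ 130) ^ 2 := by ring
      _ < B ^ 2 := by gcongr
      _ ≤ f := Nat.le_of_dvd hf hdvd
      _ ≤ U ^ 3 * u ^ 32 := h.factor_le hS
      _ = V ^ 3 * u ^ 260 * u ^ 72 := by rw [hS.eq_mul]; ring
  have hu := hS.thousand_le
  exact absurd (lt_of_mul_lt_mul_left' hlt)
    (((Nat.pow_le_pow_right (by omega) (by norm_num)).trans hS.le_V).not_gt)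

theorem le_radical_of_five (h : ScaledPair 5 u U V C q s f w₁ w₂) (hS : Scale 5 u U V Y C)
    (hB : ∀ B, B ^ 2 ∣ powQuot 5 w₁ w₂ → B ≤ u ^ 12 ∨ V ^ 2 * u ^ 130 < B) :
    U ^ 3 * u ^ 6 ≤ radical f := by
  have hu := hS.thousand_le
  have hf : f ≠ 0 := (Nat.pos_of_mul_pos_left (h.mul_factor_pos (by norm_num))).ne'
  obtain ⟨a, b, hfa, ha⟩ := Nat.sq_mul_squarefree f
  have hbf : b ^ 2 ∣ f := ⟨a, hfa.symm⟩
  have hb : b ≤ u ^ 12 := (hB b (h.powQuot_eq ▸ hbf.mul_left q)).resolve_right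
    fun hlt => h.sq_not_dvd_of_five hS hlt hbf
  have har : a ≤ radical f := Nat.le_of_dvd (Nat.radical_pos f)
    ((UniqueFactorizationMonoid.dvd_radical_iff ha.isRadical hf).2 ⟨b ^ 2, by rw [← hfa, mul_comm]⟩)
  refine le_of_mul_le_mul_left (a := u ^ 24) ?_ (by positivity)
  calc u ^ 24 * (U ^ 3 * u ^ 6) = U ^ 3 * u ^ 30 := by ring
    _ ≤ f := h.le_factor hS
    _ = b ^ 2 * a := hfa.symm
    _ ≤ (u ^ 12) ^ 2 * radical f := by gcongr
    _ = u ^ 24 * radical f := by rw [← pow_mul]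

theorem mul_pow_lt_radical (h : ScaledPair p u U V C q s f w₁ w₂) (hS : Scale p u U V Y C)
    (hB : ∀ B, B ^ 2 ∣ powQuot p w₁ w₂ → B ≤ u ^ 12 ∨ V ^ 2 * u ^ 130 < B) :
    Y * (4 * w₁ ^ max 3 (p - 4)) < radical f := by
  set R := max 3 (p - 4) with hR
  have hu := hS.thousand_le
  have hU := hS.U_pos
  have hY := hS.Y_le
  have hRp : R ≤ p := by have := hS.five_le; omega
  have hrad : U ^ R * u ^ 6 ≤ radical f := by
    rcases (show p = 5 ∨ p = 6 ∨ 7 ≤ p by have := hS.five_le; omega) with rfl | rfl | hp7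
    · exact h.le_radical_of_five hS hB
    · exact absurd hS.prime (by norm_num)
    · rw [hR, max_eq_right (by omega)]
      exact (Nat.mul_le_mul_left _ (Nat.pow_le_pow_right (by omega) (by norm_num))).trans
        (h.le_radical hS)
  have h2 : 4 * 2 ^ R ≤ u := by
    refine le_trans ?_ hS.mul_two_pow_le
    gcongr <;> have := hS.five_le <;> omega
  refine lt_of_lt_of_le ?_ hrad
  calc Y * (4 * w₁ ^ R) ≤ u * (4 * (2 * U) ^ R) := by gcongr; exact h.le_two_mul
    _ = U ^ R * (u * (4 * 2 ^ R)) := by ring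
    _ ≤ U ^ R * (u * u) := by gcongr
    _ < U ^ R * u ^ 6 := by
        rw [← sq]
        gcongr <;> omega

theorem balanced_of_le (h : ScaledPair p u U V C q s f w₁ w₂) (hS : Scale p u U V Y C) {D : ℕ}
    (hD0 : 0 < D) (hD : D ≤ u ^ 12) :
    p * (4 * C * s) * (C * s * 1) < w₁ * (q * D) ∧
      p * (4 * C * s) * (q * D) * Y < w₁ * (C * s * 1) := by
  have hV := hS.V_pos
  have hu := hS.thousand_le
  have hpu := hS.four_mul_le
  have hCs : 0 < C * s := by have := h.mul_pos; rw [mul_assoc] at this; omega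
  constructor
  · calc p * (4 * C * s) * (C * s * 1) ≤ u * (V * u ^ 42) * (u * (V * u ^ 40) * 1) := by
          gcongr ?_ * ?_ * (?_ * ?_ * 1)
          exacts [by omega, h.mul_le hS, hS.C_le, h.s_le]
      _ = V ^ 2 * u ^ 84 := by ring
      _ < V ^ 2 * u ^ 169 := by gcongr <;> omega
      _ = u ^ 100 * V * (V * u ^ 69 * 1) := by ring
      _ ≤ w₁ * (q * D) := by
          rw [← hS.eq_mul]
          gcongr
          exacts [h.U_le, h.le_q, hD0]
  · calc p * (4 * C * s) * (q * D) * Y = C * s * (4 * p * (q * D) * Y) := by ring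
      _ ≤ C * s * (u * (V * u ^ 70 * u ^ 12) * u) := by
          gcongr
          exacts [h.q_le, hS.Y_le]
      _ = C * s * (V * u ^ 84) := by ring
      _ < C * s * (V * u ^ 100) := by gcongr <;> omega
      _ ≤ C * s * w₁ := Nat.mul_le_mul_left _ ((hS.mul_le_U le_rfl).trans h.U_le)
      _ = w₁ * (C * s * 1) := by ring

theorem balanced_of_lt (h : ScaledPair p u U V C q s f w₁ w₂) (hS : Scale p u U V Y C) {D : ℕ}
    (hlt : V ^ 2 * u ^ 130 < D) (hle : D ≤ V ^ 2 * u ^ 145) :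
    p * (4 * C * s) * (C * s * q) < w₁ * (1 * D) ∧
      p * (4 * C * s) * (1 * D) * Y < w₁ * (C * s * q) := by
  have hV := hS.V_pos
  have hu := hS.thousand_le
  have hpu := hS.four_mul_le
  have hCs : 0 < C * s := by have := h.mul_pos; rw [mul_assoc] at this; omega
  constructor
  · calc p * (4 * C * s) * (C * s * q) ≤ u * (V * u ^ 42) * (u * (V * u ^ 40) * (V * u ^ 70)) := by
          gcongr ?_ * ?_ * (?_ * ?_ * ?_)
          exacts [by omega, h.mul_le hS, hS.C_le, h.s_le, h.q_le]
      _ = V ^ 3 * u ^ 154 := by ring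
      _ < V ^ 3 * u ^ 230 := by gcongr <;> omega
      _ = u ^ 100 * V * (1 * (V ^ 2 * u ^ 130)) := by ring
      _ ≤ w₁ * (1 * D) := by
          rw [← hS.eq_mul]
          gcongr
          exact h.U_le
  · calc p * (4 * C * s) * (1 * D) * Y = C * s * (4 * p * D * Y) := by ring
      _ ≤ C * s * (u * (V ^ 2 * u ^ 145) * u) := by
          gcongr
          exact hS.Y_le
      _ = C * s * (V ^ 2 * u ^ 147) := by ring
      _ < C * s * (V ^ 2 * u ^ 169) := by gcongr <;> omega
      _ = C * s * (u ^ 100 * V * (V * u ^ 69)) := by ring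
      _ ≤ C * s * (w₁ * q) := by
          rw [← hS.eq_mul]
          gcongr
          exacts [h.U_le, h.le_q]
      _ = w₁ * (C * s * q) := by ring

-- The large prime `q` goes to whichever side balances the two factors.
theorem exists_powerPair_balanced (h : ScaledPair p u U V C q s f w₁ w₂) (hS : Scale p u U V Y C)
    {D : ℕ} (hD0 : 0 < D) (hD : D ≤ u ^ 12 ∨ V ^ 2 * u ^ 130 < D ∧ D ≤ V ^ 2 * u ^ 145) :
    ∃ q₁ q₂, PowerPair p C s (q₁ * q₂) f w₁ w₂ ∧
      p * (4 * C * s) * (C * s * q₁) < w₁ * (q₂ * D) ∧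
      p * (4 * C * s) * (q₂ * D) * Y < w₁ * (C * s * q₁) := by
  rcases hD with hD | ⟨hlt, hle⟩
  · exact ⟨1, q, by simpa only [one_mul] using h.toPowerPair, h.balanced_of_le hS hD0 hD⟩
  · exact ⟨q, 1, by simpa only [mul_one] using h.toPowerPair, h.balanced_of_lt hS hlt hle⟩

theorem exists_hasClassRankTwo (h : ScaledPair p u U V C q s f w₁ w₂) (hS : Scale p u U V Y C)
    (hB : ∀ B, B ^ 2 ∣ powQuot p w₁ w₂ → B ≤ u ^ 12 ∨ V ^ 2 * u ^ 130 < B) :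
    ∃ d n, HasClassRankTwo p d ∧ 4 * d ≤ U ^ (2 * p - 2) * u ^ 34 ∧ n ∣ d ∧
      n ∣ powQuot p w₁ w₂ ∧ U ^ 2 ≤ n := by
  have hp5 := hS.five_le
  have hU := hS.U_pos
  have hf : f ≠ 0 := (Nat.pos_of_mul_pos_left (h.mul_factor_pos hS.prime.ne_zero)).ne'
  obtain ⟨D, t, hfD, hDf⟩ := exists_eq_mul_radical_mul_sq hf
  have hDle := h.sq_divisor_le hS hfD
  have hD0 : 0 < D := Nat.pos_of_ne_zero fun h0 => hf (by rw [hfD, h0, zero_mul])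
  obtain ⟨q₁, q₂, hpair, h₁, h₂⟩ := h.exists_powerPair_balanced hS hD0
    ((hB D (h.powQuot_eq ▸ hDf.mul_left q)).imp_right fun hlt => ⟨hlt, hDle⟩)
  have hww : w₁ * w₂ < Y ^ Y := by
    refine lt_of_le_of_lt ?_ hS.lt_pow
    calc w₁ * w₂ ≤ (2 * U) * (2 * U) := Nat.mul_le_mul h.le_two_mul (h.le.trans h.le_two_mul)
      _ = 4 * U ^ 2 := by ring
  have hrad := h.mul_pow_lt_radical hS hB
  obtain ⟨d, n, hd, hnd, hnf, hradn, hdle⟩ := hpair.exists_hasClassRankTwo hS.prime (by omega)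
    hS.dvd_C hww hfD h₁ h₂ hrad
  refine ⟨d, n, hd, ?_, hnd, h.powQuot_eq ▸ hnf.mul_left q, ?_⟩
  · have h2 : 4 * 2 ^ p ≤ u := by
      refine le_trans ?_ hS.mul_two_pow_le
      gcongr <;> omega
    calc 4 * d ≤ 4 * (u * (U ^ (p - 2) * u ^ 32) * (2 * U) ^ p) := by
          refine Nat.mul_le_mul_left 4 (hdle.trans ?_)
          gcongr
          exacts [hS.Y_le, h.factor_le hS, h.le_two_mul]
      _ = U ^ (p - 2) * U ^ p * u ^ 33 * (4 * 2 ^ p) := by ring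
      _ ≤ U ^ (2 * p - 2) * u ^ 33 * u := by
          rw [← pow_add, show p - 2 + p = 2 * p - 2 by omega]
          gcongr
      _ = U ^ (2 * p - 2) * u ^ 34 := by ring
  · have hlt : 4 * w₁ ^ max 3 (p - 4) < n := lt_of_mul_lt_mul_left' (hrad.trans_le hradn)
    calc U ^ 2 ≤ U ^ max 3 (p - 4) := Nat.pow_le_pow_right hU (by omega)
      _ ≤ w₁ ^ max 3 (p - 4) := Nat.pow_le_pow_left h.U_le _
      _ ≤ n := by omega

end ScaledPair

namespace Scale

variable {p u U V Y C q s i : ℕ}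

theorem mul_add_two_le (h : Scale p u U V Y C) (hq : q ≤ V * u ^ 70) (hi : i < u ^ 28) :
    4 * C * q * (i + 2) ≤ U := by
  have hu := h.thousand_le
  have hC := h.C_le
  calc 4 * C * q * (i + 2) ≤ 4 * u * (V * u ^ 70) * (2 * u ^ 28) := by
        gcongr
        have : 1 ≤ u ^ 28 := Nat.one_le_pow _ _ (by omega)
        omega
    _ = 8 * (V * u ^ 99) := by ring
    _ ≤ u * (V * u ^ 99) := Nat.mul_le_mul_right _ (by omega)
    _ = u ^ 100 * V := by ring
    _ = U := h.eq_mul.symm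

theorem not_dvd_two_mul (h : Scale p u U V Y C) {k : ℕ} (hk : 2 ≤ k) (hq : V * u ^ k ≤ q) :
    ¬ q ∣ 2 * C := fun hdvd => by
  have hu := h.thousand_le
  have hlt : 2 * C < q := by
    calc 2 * C ≤ 2 * u := Nat.mul_le_mul_left 2 h.C_le
      _ < u * u := by gcongr; omega
      _ = u ^ 2 := (sq u).symm
      _ ≤ u ^ k := Nat.pow_le_pow_right (by omega) hk
      _ ≤ V * u ^ k := Nat.le_mul_of_pos_left _ h.V_pos
      _ ≤ q := hq
  exact hlt.not_ge (Nat.le_of_dvd (by have := h.C_pos; omega) hdvd)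

theorem exists_scaledPair (h : Scale p u U V Y C)
    (hq : q ∈ primesIcc (1 : ZMod p) (V * u ^ 69) (V * u ^ 70))
    (hs : s ∈ primesIcc (1 : ZMod p) (V * u ^ 39) (V * u ^ 40)) (hi : i < u ^ 28) :
    ∃ f w₁ w₂, ScaledPair p u U V C q s f w₁ w₂ ∧ w₁ / (4 * C * q) = U / (4 * C * q) + 1 + i := by
  obtain ⟨hqI, hq, hqp⟩ := Finset.mem_filter.1 hq
  obtain ⟨hsI, hs, -⟩ := Finset.mem_filter.1 hs
  rw [Finset.mem_Icc] at hqI hsI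
  have hu := h.thousand_le
  have hV := h.V_pos
  have hsq : s < q := by
    refine (hsI.2.trans_lt ?_).trans_le hqI.1
    gcongr <;> omega
  have hCs : 4 * C * s + 1 ≤ U := by
    refine le_trans ?_ (h.mul_add_two_le hqI.2 hi)
    calc 4 * C * s + 1 ≤ 4 * C * (s + 1) := by rw [mul_add]; have := h.C_pos; omega
      _ ≤ 4 * C * q := Nat.mul_le_mul_left _ hsq
      _ ≤ 4 * C * q * (i + 2) := Nat.le_mul_of_pos_right _ (by omega)
  have hN : 0 < 4 * C * q := Nat.mul_pos (by have := h.C_pos; omega) hq.pos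
  set N := 4 * C * q with hNdef
  set j := U / N + 1 + i
  have hUj : U < N * j :=
    (Nat.lt_mul_div_succ U hN).trans_le (Nat.mul_le_mul_left N (Nat.le_add_right _ _))
  have hj2 : N * (j + 1) ≤ 2 * U := by
    calc N * (j + 1) = N * (U / N) + N * (i + 2) := by ring
      _ ≤ U + U := Nat.add_le_add (Nat.mul_div_le U N) (h.mul_add_two_le hqI.2 hi)
      _ = 2 * U := (two_mul U).symm
  obtain ⟨w, hw, hodd, f, hpair⟩ := exists_powerPair h.prime h.C_pos hq hqp hs
    (h.not_dvd_two_mul (by norm_num) hqI.1) (h.not_dvd_two_mul (by norm_num) hsI.1) hsq.ne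
    (j := j) (by rw [← hNdef]; omega)
  rw [← hNdef, Finset.mem_Ico] at hw
  exact ⟨f, w, _, ⟨hpair, hodd, hqI.1, hqI.2, hsI.2, by omega, by omega⟩,
    Nat.div_eq_of_lt_le (by rw [mul_comm]; exact hw.1) (by rw [mul_comm]; exact hw.2)⟩

theorem card_parameters_le (h : Scale p u U V Y C) {T : Finset (ℕ × ℕ × ℕ)} {w₁ w₂ : ℕ}
    (hT : ∀ x ∈ T, (∃ f, ScaledPair p u U V C x.1 x.2.1 f w₁ w₂) ∧
      w₁ / (4 * C * x.1) = U / (4 * C * x.1) + 1 + x.2.2) : T.card ≤ u := by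
  rcases T.eq_empty_or_nonempty with rfl | ⟨x, hx⟩
  · exact Nat.zero_le u
  obtain ⟨⟨f, hx⟩, -⟩ := hT x hx
  have hpos : powQuot p w₁ w₂ ≠ 0 := (hx.odd_powQuot h).pos.ne'
  refine le_trans (Finset.card_le_card_of_injOn Prod.fst (t := (powQuot p w₁ w₂).divisors)
    (fun y hy => ?_) fun y hy z hz hq => ?_) (h.card_divisors_le _ hpos (hx.powQuot_le_pow h))
  · obtain ⟨⟨g, hy⟩, -⟩ := hT y hy
    exact Nat.mem_divisors.2 ⟨⟨g, hy.powQuot_eq⟩, hpos⟩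
  · obtain ⟨⟨_, hy⟩, hyi⟩ := hT y hy
    obtain ⟨⟨_, hz⟩, hzi⟩ := hT z hz
    have hs : y.2.1 = z.2.1 := by
      have hsub := hy.eq_add.symm.trans hz.eq_add
      exact Nat.eq_of_mul_eq_mul_left (by have := h.C_pos; omega) (Nat.add_left_cancel hsub)
    rw [hq] at hyi
    exact Prod.ext hq (Prod.ext hs (Nat.add_left_cancel (hyi.symm.trans hzi)))

theorem exists_finset_scaledPair (h : Scale p u U V Y C) : ∃ S : Finset (ℕ × ℕ),
    (∀ w ∈ S, ∃ q s f, ScaledPair p u U V C q s f w.1 w.2) ∧ U ^ 2 ≤ u ^ 65 * S.card := by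
  set Q := primesIcc (1 : ZMod p) (V * u ^ 69) (V * u ^ 70)
  set P := primesIcc (1 : ZMod p) (V * u ^ 39) (V * u ^ 40)
  set T := Q ×ˢ P ×ˢ Finset.range (u ^ 28) with hT
  have hex : ∀ x ∈ T, ∃ f, ∃ w : ℕ × ℕ, ScaledPair p u U V C x.1 x.2.1 f w.1 w.2 ∧
      w.1 / (4 * C * x.1) = U / (4 * C * x.1) + 1 + x.2.2 := fun x hx => by
    simp only [hT, Finset.mem_product, Finset.mem_range] at hx
    obtain ⟨f, w₁, w₂, hw⟩ := h.exists_scaledPair hx.1 hx.2.1 hx.2.2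
    exact ⟨f, (w₁, w₂), hw⟩
  choose! f w hw hdiv using hex
  refine ⟨T.image w, fun v hv => ?_, ?_⟩
  · obtain ⟨x, hx, rfl⟩ := Finset.mem_image.1 hv
    exact ⟨_, _, _, hw x hx⟩
  have hcard : T.card ≤ u * (T.image w).card := Finset.card_le_mul_card_image T u fun v _ => by
    refine h.card_parameters_le (w₁ := v.1) (w₂ := v.2) fun x hx => ?_
    obtain ⟨hxT, rfl⟩ := Finset.mem_filter.1 hx
    exact ⟨⟨f x, hw x hxT⟩, hdiv x hxT⟩
  calc U ^ 2 = u ^ 64 * (V * u ^ 69 * (V * u ^ 39 * u ^ 28)) := by rw [h.eq_mul]; ring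
    _ ≤ u ^ 64 * T.card := by
        rw [hT, Finset.card_product, Finset.card_product, Finset.card_range]
        gcongr
        exacts [h.le_card_primesIcc 69 (by norm_num), h.le_card_primesIcc 39 (by norm_num)]
    _ ≤ u ^ 64 * (u * (T.image w).card) := Nat.mul_le_mul_left _ hcard
    _ = u ^ 65 * (T.image w).card := by ring

end Scale

/-! ### Counting -/

theorem pow_eq_pow_of_dvd_powQuot {n p a b : ℕ} (hab : b ≤ a) (h : n ∣ powQuot p a b) :
    (a : ZMod n) ^ p = (b : ZMod n) ^ p := by
  obtain ⟨e, rfl⟩ := Nat.exists_eq_add_of_le hab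
  have heq := congr_arg (Nat.cast (R := ZMod n)) (add_pow_eq_pow_add_mul_powQuot p b e)
  rw [Nat.cast_add, Nat.cast_mul, (ZMod.natCast_eq_zero_iff _ n).2 h, mul_zero, add_zero] at heq
  exact_mod_cast heq

theorem sum_Ioc_div_sq_le (A : ℕ) {k : ℕ} (hk : 0 < k) (n : ℕ) :
    ∑ B ∈ Finset.Ioc k n, A / B ^ 2 ≤ A / k := by
  rcases lt_or_ge n k with hnk | hkn
  · simp [Finset.Ioc_eq_empty_of_le hnk.le]
  rw [Nat.le_div_iff_mul_le hk]
  have hk' : (0 : ℝ) < k := Nat.cast_pos.2 hk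
  suffices ((∑ B ∈ Finset.Ioc k n, A / B ^ 2 : ℕ) : ℝ) ≤ A * (k : ℝ)⁻¹ by
    rw [← div_eq_mul_inv, le_div_iff₀ hk'] at this
    exact_mod_cast this
  push_cast
  calc ∑ B ∈ Finset.Ioc k n, ((A / B ^ 2 : ℕ) : ℝ)
      ≤ ∑ B ∈ Finset.Ioc k n, A * ((B : ℝ) ^ 2)⁻¹ := Finset.sum_le_sum fun B _ => by
        rw [← div_eq_mul_inv]
        exact_mod_cast (Nat.cast_div_le (α := ℝ) : ((A / B ^ 2 : ℕ) : ℝ) ≤ A / (B ^ 2 : ℕ))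
    _ = A * ∑ B ∈ Finset.Ioc k n, ((B : ℝ) ^ 2)⁻¹ := by rw [Finset.mul_sum]
    _ ≤ A * (k : ℝ)⁻¹ := by
        gcongr
        exact (sum_Ioc_inv_sq_le_sub hk.ne' hkn).trans (sub_le_self _ (by positivity))

theorem card_le_mul_card_image_of_dvd {α : Type*} {S : Finset α} {d n : α → ℕ} {k l : ℕ}
    (hnd : ∀ w ∈ S, n w ∣ d w) (hd : ∀ w ∈ S, d w ≠ 0) (hdiv : ∀ w ∈ S, (d w).divisors.card ≤ k)
    (hfibre : ∀ v ∈ S, {w ∈ S | n w = n v}.card ≤ l) : S.card ≤ l * (k * (S.image d).card) := by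
  classical
  have hmaps : ∀ w ∈ S, (⟨d w, n w⟩ : Σ _ : ℕ, ℕ) ∈ (S.image d).sigma Nat.divisors :=
    fun w hw => Finset.mem_sigma.2
      ⟨Finset.mem_image_of_mem d hw, Nat.mem_divisors.2 ⟨hnd w hw, hd w hw⟩⟩
  refine (Finset.card_le_mul_card_image_of_maps_to hmaps l fun x _ => ?_).trans
    (Nat.mul_le_mul_left l ?_)
  · rcases Finset.eq_empty_or_nonempty {w ∈ S | (⟨d w, n w⟩ : Σ _ : ℕ, ℕ) = x} with hx | ⟨v, hv⟩
    · rw [hx]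
      exact Nat.zero_le l
    obtain ⟨hvS, rfl⟩ := Finset.mem_filter.1 hv
    refine (Finset.card_le_card (Finset.monotone_filter_right S fun w _ hw => ?_)).trans
      (hfibre v hvS)
    exact eq_of_heq (Sigma.mk.inj hw).2
  · rw [Finset.card_sigma, mul_comm, ← smul_eq_mul]
    exact Finset.sum_le_card_nsmul _ _ _ (Finset.forall_mem_image.2 hdiv)

namespace Scale

variable {p u U V Y C : ℕ}

theorem card_le_of_dvd_powQuot (h : Scale p u U V Y C) {S : Finset (ℕ × ℕ)}
    (hS : ∀ w ∈ S, ∃ q s f, ScaledPair p u U V C q s f w.1 w.2) {n : ℕ}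
    (hn : ∀ w ∈ S, n ∣ powQuot p w.1 w.2) : S.card ≤ (4 * V ^ 2 * u ^ 142 / n + 1) * u := by
  rcases S.eq_empty_or_nonempty with rfl | ⟨v, hv⟩
  · exact Nat.zero_le _
  obtain ⟨_, _, _, hpair⟩ := hS v hv
  have hodd : Odd n := (hpair.odd_powQuot h).of_dvd_nat (hn v hv)
  have hle : n ≤ U ^ (2 * p) :=
    (Nat.le_of_dvd (hpair.odd_powQuot h).pos (hn v hv)).trans (hpair.powQuot_le_pow h)
  have hnarrow : ∀ w ∈ S, NarrowPair U (2 * U) (V * u ^ 42) w := fun w hw => by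
    obtain ⟨_, _, _, hw⟩ := hS w hw
    exact hw.narrowPair h
  have hdiv : V * u ^ 42 * (2 * U) ^ 2 / (U * n) = 4 * V ^ 2 * u ^ 142 / n := by
    rw [← Nat.mul_div_mul_left (4 * V ^ 2 * u ^ 142) n h.U_pos]
    congr 1
    rw [h.eq_mul]
    ring
  rw [← hdiv]
  refine (NarrowPair.card_le_of_pow_eq_pow hnarrow h.U_pos hodd.pos h.prime.ne_zero fun w hw =>
    pow_eq_pow_of_dvd_powQuot (hnarrow w hw).le (hn w hw)).trans ?_
  exact Nat.mul_le_mul_left _ (h.card_rootsOfUnity_le n hodd hle)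

theorem card_biUnion_sq_dvd_powQuot_le (h : Scale p u U V Y C) {S : Finset (ℕ × ℕ)}
    (hS : ∀ w ∈ S, ∃ q s f, ScaledPair p u U V C q s f w.1 w.2) :
    ((Finset.Ioc (u ^ 12) (V ^ 2 * u ^ 130)).biUnion fun B =>
      {w ∈ S | B ^ 2 ∣ powQuot p w.1 w.2}).card ≤ V ^ 2 * u ^ 132 := by
  have hu := h.thousand_le
  set I := Finset.Ioc (u ^ 12) (V ^ 2 * u ^ 130) with hI
  calc (I.biUnion fun B => {w ∈ S | B ^ 2 ∣ powQuot p w.1 w.2}).card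
      ≤ ∑ B ∈ I, {w ∈ S | B ^ 2 ∣ powQuot p w.1 w.2}.card := Finset.card_biUnion_le
    _ ≤ ∑ B ∈ I, (4 * V ^ 2 * u ^ 142 / B ^ 2 + 1) * u := Finset.sum_le_sum fun B _ =>
        h.card_le_of_dvd_powQuot (fun w hw => hS w (Finset.mem_filter.1 hw).1)
          fun w hw => (Finset.mem_filter.1 hw).2
    _ = (∑ B ∈ I, 4 * V ^ 2 * u ^ 142 / B ^ 2 + I.card) * u := by
        rw [← Finset.sum_mul, Finset.sum_add_distrib, Finset.card_eq_sum_ones]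
    _ ≤ (4 * V ^ 2 * u ^ 130 + V ^ 2 * u ^ 130) * u := by
        gcongr
        · refine (sum_Ioc_div_sq_le _ (by positivity) _).trans_eq ?_
          rw [show 4 * V ^ 2 * u ^ 142 = 4 * V ^ 2 * u ^ 130 * u ^ 12 by ring]
          exact Nat.mul_div_cancel _ (by positivity)
        · rw [hI, Nat.card_Ioc]
          exact Nat.sub_le _ _
    _ = V ^ 2 * u ^ 131 * 5 := by ring
    _ ≤ V ^ 2 * u ^ 131 * u := Nat.mul_le_mul_left _ (by omega)
    _ = V ^ 2 * u ^ 132 := by ring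

theorem exists_finset_scaledPair_of_sq_dvd (h : Scale p u U V Y C) : ∃ S : Finset (ℕ × ℕ),
    (∀ w ∈ S, (∃ q s f, ScaledPair p u U V C q s f w.1 w.2) ∧
      ∀ B, B ^ 2 ∣ powQuot p w.1 w.2 → B ≤ u ^ 12 ∨ V ^ 2 * u ^ 130 < B) ∧
    U ^ 2 ≤ u ^ 66 * S.card := by
  have hu := h.thousand_le
  obtain ⟨S, hS, hcard⟩ := h.exists_finset_scaledPair
  have hbad := h.card_biUnion_sq_dvd_powQuot_le hS
  set T := (Finset.Ioc (u ^ 12) (V ^ 2 * u ^ 130)).biUnion fun B =>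
    {w ∈ S | B ^ 2 ∣ powQuot p w.1 w.2}
  have hsdiff : S.card - T.card ≤ (S \ T).card := Finset.le_card_sdiff T S
  refine ⟨S \ T, fun w hw => ?_, ?_⟩
  · obtain ⟨hwS, hwT⟩ := Finset.mem_sdiff.1 hw
    refine ⟨hS w hwS, fun B hB => ?_⟩
    by_contra! hBI
    exact hwT (Finset.mem_biUnion.2 ⟨B, Finset.mem_Ioc.2 hBI, Finset.mem_filter.2 ⟨hwS, hB⟩⟩)
  set x := V ^ 2 * u ^ 197
  have hU : U ^ 2 = u ^ 3 * x := by rw [h.eq_mul]; ring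
  have hle : u ^ 3 * x ≤ u ^ 65 * (S \ T).card + x := by
    calc u ^ 3 * x ≤ u ^ 65 * S.card := hU ▸ hcard
      _ ≤ u ^ 65 * (V ^ 2 * u ^ 132 + (S \ T).card) := Nat.mul_le_mul_left _ (by omega)
      _ = u ^ 65 * (S \ T).card + x := by ring
  have hx : 2 * x ≤ u ^ 3 * x :=
    Nat.mul_le_mul_right x ((by omega : 2 ≤ u).trans (Nat.le_self_pow (by norm_num) u))
  calc U ^ 2 = u ^ 3 * x := hU
    _ ≤ 2 * (u ^ 65 * (S \ T).card) := by omega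
    _ ≤ u * (u ^ 65 * (S \ T).card) := Nat.mul_le_mul_right _ (by omega)
    _ = u ^ 66 * (S \ T).card := by ring

theorem card_filter_dvd_powQuot_le (h : Scale p u U V Y C) {S : Finset (ℕ × ℕ)}
    (hS : ∀ w ∈ S, ∃ q s f, ScaledPair p u U V C q s f w.1 w.2) {n : ℕ} (hn : U ^ 2 ≤ n) :
    {w ∈ S | n ∣ powQuot p w.1 w.2}.card ≤ u := by
  have hlt : 4 * V ^ 2 * u ^ 142 < n := by
    have := h.thousand_le
    have := h.V_pos
    have := Nat.le_self_pow (n := 58) (by norm_num) u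
    calc 4 * V ^ 2 * u ^ 142 = V ^ 2 * u ^ 142 * 4 := by ring
      _ < V ^ 2 * u ^ 142 * u ^ 58 := by gcongr; omega
      _ = U ^ 2 := by rw [h.eq_mul]; ring
      _ ≤ n := hn
  have hcard := h.card_le_of_dvd_powQuot (S := {w ∈ S | n ∣ powQuot p w.1 w.2})
    (fun w hw => hS w (Finset.mem_filter.1 hw).1) fun w hw => (Finset.mem_filter.1 hw).2
  rwa [Nat.div_eq_of_lt hlt, zero_add, one_mul] at hcard

theorem le_pow_of_four_mul_le (h : Scale p u U V Y C) {d : ℕ}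
    (hd : 4 * d ≤ U ^ (2 * p - 2) * u ^ 34) : d ≤ U ^ (2 * p) := by
  have hu := h.thousand_le
  calc d ≤ U ^ (2 * p - 2) * u ^ 34 := by omega
    _ ≤ U ^ (2 * p - 2) * U ^ 2 := by
        gcongr U ^ (2 * p - 2) * ?_
        calc u ^ 34 ≤ u ^ 200 * V ^ 2 :=
              (Nat.pow_le_pow_right (by omega) (by norm_num)).trans
                (Nat.le_mul_of_pos_right _ (pow_pos h.V_pos 2))
          _ = U ^ 2 := by rw [h.eq_mul]; ring
    _ = U ^ (2 * p) := by
        rw [← pow_add]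
        congr 1
        have := h.five_le
        omega

theorem exists_finset_hasClassRankTwo (h : Scale p u U V Y C) : ∃ S : Finset ℕ,
    (∀ d ∈ S, HasClassRankTwo p d ∧ 4 * d ≤ U ^ (2 * p - 2) * u ^ 34) ∧
      U ^ 2 ≤ u ^ 68 * S.card := by
  obtain ⟨S, hS, hcard⟩ := h.exists_finset_scaledPair_of_sq_dvd
  have hex : ∀ w ∈ S, ∃ d n, HasClassRankTwo p d ∧ 4 * d ≤ U ^ (2 * p - 2) * u ^ 34 ∧ n ∣ d ∧
      n ∣ powQuot p w.1 w.2 ∧ U ^ 2 ≤ n := fun w hw => by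
    obtain ⟨⟨_, _, _, hpair⟩, hB⟩ := hS w hw
    exact hpair.exists_hasClassRankTwo h hB
  choose! d n hd hdle hnd hn hnU using hex
  refine ⟨S.image d, Finset.forall_mem_image.2 fun w hw => ⟨hd w hw, hdle w hw⟩, ?_⟩
  have hfibre : ∀ v ∈ S, {w ∈ S | n w = n v}.card ≤ u := fun v hv =>
    (Finset.card_le_card fun w hw => by
      obtain ⟨hwS, hwv⟩ := Finset.mem_filter.1 hw
      exact Finset.mem_filter.2 ⟨hwS, hwv ▸ hn w hwS⟩).trans
        (h.card_filter_dvd_powQuot_le (fun w hw => (hS w hw).1) (hnU v hv))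
  have himage := card_le_mul_card_image_of_dvd hnd (fun w hw => (hd w hw).1.ne_zero)
    (fun w hw => h.card_divisors_le _ (hd w hw).1.ne_zero (h.le_pow_of_four_mul_le (hdle w hw)))
    hfibre
  calc U ^ 2 ≤ u ^ 66 * S.card := hcard
    _ ≤ u ^ 66 * (u * (u * (S.image d).card)) := Nat.mul_le_mul_left _ himage
    _ = u ^ 68 * (S.image d).card := by ring

end Scale

open Filter in
theorem ABCConjecture.eventually_exists_finset_hasClassRankTwo (habc : ABCConjecture) {p m : ℕ}
    (hp : p.Prime) (hp5 : 5 ≤ p) (hm : 200 ≤ m) : ∀ᶠ u : ℕ in atTop, ∃ S : Finset ℕ,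
      (∀ d ∈ S, HasClassRankTwo p d ∧ 4 * d ≤ u ^ (m * (2 * p - 2) + 34)) ∧
        u ^ (2 * m - 68) ≤ S.card := by
  filter_upwards [habc.eventually_exists_scale hp hp5 hm] with u ⟨Y, C, h⟩
  obtain ⟨S, hS, hcard⟩ := h.exists_finset_hasClassRankTwo
  have hu := h.thousand_le
  refine ⟨S, fun d hd => ⟨(hS d hd).1, ?_⟩, ?_⟩
  · rw [pow_add, pow_mul]
    exact (hS d hd).2
  · refine le_of_mul_le_mul_left (a := u ^ 68) ?_ (by positivity)
    rwa [← pow_add, Nat.add_sub_cancel' (by omega), mul_comm 2, pow_mul]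

open Filter in
theorem exists_mul_rpow_le_of_eventually_pow_le {N : ℝ → ℕ} {E L : ℕ} (hE : E ≠ 0)
    (h : ∀ᶠ u : ℕ in atTop, ∀ X : ℝ, (u : ℝ) ^ E ≤ X → u ^ L ≤ N X) {θ : ℝ}
    (hθ : θ ≤ (L : ℝ) / E) :
    ∃ c : ℝ, 0 < c ∧ ∃ X₀ : ℝ, ∀ X : ℝ, X₀ ≤ X → c * X ^ θ ≤ N X := by
  obtain ⟨u₀, hu₀⟩ := eventually_atTop.1 h
  refine ⟨(1 / 2) ^ L, by positivity, max 1 ((u₀ : ℝ) ^ E), fun X hX => ?_⟩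
  obtain ⟨hX1, hXu₀⟩ := max_le_iff.1 hX
  set x : ℝ := X ^ ((E : ℝ)⁻¹) with hx
  have hxE : x ^ E = X := Real.rpow_inv_natCast_pow (by linarith) hE
  have hx1 : 1 ≤ x := Real.one_le_rpow hX1 (by positivity)
  have hu₀x : (u₀ : ℝ) ≤ x := le_of_pow_le_pow_left₀ hE (by linarith) (hxE ▸ hXu₀)
  have hfloor : (⌊x⌋₊ : ℝ) ≤ x := Nat.floor_le (by linarith)
  have hhalf : x / 2 ≤ ⌊x⌋₊ := by
    have hone : (1 : ℝ) ≤ ⌊x⌋₊ := by exact_mod_cast Nat.le_floor (by exact_mod_cast hx1)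
    linarith [Nat.lt_floor_add_one x]
  have hcount : ⌊x⌋₊ ^ L ≤ N X := hu₀ _ (Nat.le_floor hu₀x) X (by rw [← hxE]; gcongr)
  calc (1 / 2) ^ L * X ^ θ ≤ (1 / 2) ^ L * X ^ ((L : ℝ) / E) := by gcongr
    _ = (1 / 2) ^ L * x ^ L := by
        rw [hx, ← Real.rpow_mul_natCast (by linarith), inv_mul_eq_div]
    _ = (x / 2) ^ L := by rw [← mul_pow, one_div_mul_eq_div]
    _ ≤ (⌊x⌋₊ : ℝ) ^ L := by gcongr
    _ ≤ N X := by exact_mod_cast hcount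

theorem one_div_sub_le_div {P ε m : ℝ} (hP : 1 ≤ P) (hε : 0 < ε) (hm : 51 ≤ m * ε) :
    1 / P - ε ≤ (2 * m - 68) / (2 * m * P + 34) := by
  have hm0 : 0 < m := pos_of_mul_pos_left (by linarith) hε.le
  have hP' : 1 / P ≤ 1 := by rwa [div_le_one (by linarith)]
  rw [le_div_iff₀ (by positivity)]
  calc (1 / P - ε) * (2 * m * P + 34) = 2 * m + 34 * (1 / P) - 2 * (m * ε) * P - 34 * ε := by
        field_simp
        ring
    _ ≤ 2 * m - 68 := by nlinarith

theorem stmt_0 (habc : ABCConjecture) (p : ℕ) (hp : p.Prime) (hp5 : 5 ≤ p)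
    (ε : ℝ) (hε0 : 0 < ε) (hε1 : ε < 1 / ((p : ℝ) - 1)) :
    ∃ c : ℝ, 0 < c ∧ ∃ X₀ : ℝ, ∀ X : ℝ, X₀ ≤ X →
      c * X ^ ((1 : ℝ) / ((p : ℝ) - 1) - ε) ≤
        ({d : ℕ | 0 < d ∧ Squarefree d ∧
            ∀ (K : Type) [Field K] [NumberField K] (α : K),
              α ^ 2 = -(d : K) → Algebra.adjoin ℚ {α} = ⊤ →
                |(NumberField.discr K : ℝ)| ≤ X ∧
                ∃ H : Subgroup (ClassGroup (NumberField.RingOfIntegers K)),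
                  Nonempty (H ≃* Multiplicative (ZMod p × ZMod p))}.ncard : ℝ) := by
  set m : ℕ := max 200 ⌈51 / ε⌉₊
  have hm200 : 200 ≤ m := le_max_left _ _
  have hmε : 51 ≤ m * ε :=
    (div_le_iff₀ hε0).1 ((Nat.le_ceil _).trans (by exact_mod_cast le_max_right _ _))
  refine exists_mul_rpow_le_of_eventually_pow_le (N := fun X => (rankTwoSet p X).ncard)
    (E := m * (2 * p - 2) + 34) (L := 2 * m - 68) (by omega) ?_ ?_
  · filter_upwards [habc.eventually_exists_finset_hasClassRankTwo hp hp5 hm200]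
      with u ⟨S, hS, hcard⟩ X hX
    exact hcard.trans (card_le_ncard_rankTwoSet fun d hd =>
      ⟨(hS d hd).1, le_trans (by exact_mod_cast (hS d hd).2) hX⟩)
  · have hp5' : (5 : ℝ) ≤ p := by exact_mod_cast hp5
    convert one_div_sub_le_div (P := p - 1) (by linarith) hε0 hmε using 2
    · push_cast [Nat.cast_sub (by omega : 68 ≤ 2 * m)]
      ring
    · push_cast [Nat.cast_sub (by omega : 2 ≤ 2 * p)]
      ring
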